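/- arXiv:2409.06849 — 2 statements merged into one kernel-verified Lean document; each statement's English description precedes it below -/
import Mathlib

section
/- For every integer d ≥ 3, the asymptotic critical exponent of the fixed point u_d of φ_d equals E*(u_d) = 1 + 1/(3 − Λ_d), where Λ_d is the unique real number in the open interval (2,3) satisfying Λ_d^{d−1}(Λ_d − 2)^2 = 1 (equivalently, Λ_d is the spectral radius of the incidence matrix of φ_d). -/
namespace RichRT

variable {A : Type*}

/-- The word `w` occurs in the sequence `u` at position `j`. -/
def OccursAt (w : List A) (u : ℕ → A) (j : ℕ) : Prop :=
  w = (List.range w.length).map fun t => u (j + t)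

/-- `w` is a factor of the infinite sequence `u`. -/
def IsFactorS (w : List A) (u : ℕ → A) : Prop :=
  ∃ j : ℕ, OccursAt w u j

/-- `u` is recurrent: every factor occurs infinitely often. -/
def Recurrent (u : ℕ → A) : Prop :=
  ∀ w : List A, IsFactorS w u → ∀ N : ℕ, ∃ j, N ≤ j ∧ OccursAt w u j

/-- The number of distinct palindromic factors of a finite word. -/
noncomputable def palCount (w : List A) : ℕ :=
  Set.ncard {p : List A | p <:+: w ∧ p.reverse = p}

/-- A finite word of length `n` is rich if it has exactly `n+1` palindromic factors. -/
def RichWord (w : List A) : Prop := palCount w = w.length + 1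

/-- A sequence is rich if all its factors are rich. -/
def RichSeq (u : ℕ → A) : Prop := ∀ w : List A, IsFactorS w u → RichWord w

/-- The prefix of length `k` of the periodic sequence `vvv⋯`. -/
def powPref (v : List A) (k : ℕ) : List A := ((List.replicate k v).flatten).take k

/-- The set of exponents `k/|v|` of fractional powers `v^(k/|v|)` occurring in `u`,
with `|v| ≥ n`. -/
def expSet (u : ℕ → A) (n : ℕ) : Set ℝ :=
  {x | ∃ (v : List A) (k : ℕ), v ≠ [] ∧ n ≤ v.length ∧
    IsFactorS (powPref v k) u ∧ x = (k : ℝ) / (v.length : ℝ)}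

/-- The critical exponent of a sequence, with values in `EReal`. -/
noncomputable def critExp (u : ℕ → A) : EReal :=
  sSup ((fun x : ℝ => (x : EReal)) '' expSet u 0)

/-- The asymptotic critical exponent of a sequence: `⊤` if the critical exponent is `⊤`,
otherwise the limit (= infimum, by monotonicity) over `n` of the suprema of exponents of
powers `v^e` with `|v| ≥ n`. -/
noncomputable def acritExp (u : ℕ → A) : EReal :=
  if critExp u = ⊤ then ⊤
  else ⨅ n : ℕ, sSup ((fun x : ℝ => (x : EReal)) '' expSet u n)

/-- The morphism `φ_d` on letters: `i ↦ 0(i+1)` for `i < d-1`, `d-1 ↦ 0(d-1)(d-1)`. -/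
def phiL (d : ℕ) (i : ℕ) : List ℕ :=
  if i < d - 1 then [0, i + 1] else [0, d - 1, d - 1]

/-- The morphism `φ_d` on words. -/
def phiW (d : ℕ) (w : List ℕ) : List ℕ := w.flatMap (phiL d)

/-- `u` is the fixed point of `φ_d`: it begins with `0` and `φ_d(u) = u`, i.e. the image
of every prefix of `u` is again a prefix of `u`. -/
def IsPhiFixed (d : ℕ) (u : ℕ → ℕ) : Prop :=
  u 0 = 0 ∧ ∀ m : ℕ, OccursAt (phiW d ((List.range m).map u)) u 0

/-- Left extensions of `w` in `u`. -/
def Lext (u : ℕ → ℕ) (w : List ℕ) : Set (List ℕ) :=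
  {x | ∃ i : ℕ, x = i :: w ∧ IsFactorS x u}

/-- Right extensions of `w` in `u`. -/
def Rext (u : ℕ → ℕ) (w : List ℕ) : Set (List ℕ) :=
  {x | ∃ i : ℕ, x = w ++ [i] ∧ IsFactorS x u}

/-- Both-sided extensions of `w` in `u`. -/
def Bext (u : ℕ → ℕ) (w : List ℕ) : Set (List ℕ) :=
  {x | ∃ i j : ℕ, x = i :: (w ++ [j]) ∧ IsFactorS x u}

/-- `w` is a bispecial factor of `u`. -/
def Bispecial (u : ℕ → ℕ) (w : List ℕ) : Prop :=
  IsFactorS w u ∧ 2 ≤ (Lext u w).ncard ∧ 2 ≤ (Rext u w).ncard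

/-- The bilateral order `b(w) = #Bext(w) − #Lext(w) − #Rext(w) + 1`. -/
noncomputable def bord (u : ℕ → ℕ) (w : List ℕ) : ℤ :=
  ((Bext u w).ncard : ℤ) - ((Lext u w).ncard : ℤ) - ((Rext u w).ncard : ℤ) + 1

/-- The palindromes `F_0 = ε`, `F_i = φ(F_{i-1})0`. -/
def Fword (d : ℕ) : ℕ → List ℕ
  | 0 => []
  | i + 1 => phiW d (Fword d i) ++ [0]

/-- Membership in the set `𝒯` of bispecial triplets. -/
def TripleMem (d : ℕ) (u : ℕ → ℕ) (t : ℕ × List ℕ × ℕ) : Prop :=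
  Bispecial u t.2.1 ∧ t.1 < d - 1 ∧ t.2.2 < d - 1 ∧
    IsFactorS (t.1 :: t.2.1) u ∧ IsFactorS (t.2.1 ++ [t.2.2]) u

/-- The map `f` on triplets. -/
def fmap (d : ℕ) (t : ℕ × List ℕ × ℕ) : ℕ × List ℕ × ℕ :=
  ((t.1 + 1) % (d - 1),
   (if t.1 = d - 2 then [d - 1] else []) ++ phiW d t.2.1 ++ [0] ++
     (if t.2.2 = d - 2 then [d - 1] else []),
   (t.2.2 + 1) % (d - 1))

/-- The initial triplets `T_k = (0, ε, k)` for `k ≤ d-2` and `T_{d-1} = (0, d-1, 0)`. -/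
def Tinit (d k : ℕ) : ℕ × List ℕ × ℕ :=
  if k = d - 1 then (0, [d - 1], 0) else (0, ([] : List ℕ), k)

/-- The Parikh vector of a word. -/
def parikh (d : ℕ) (w : List ℕ) : Fin d → ℕ := fun i => w.count (i : ℕ)

/-- The incidence matrix of `φ_d`. -/
def Mmat (d : ℕ) : Matrix (Fin d) (Fin d) ℕ := fun i j => (phiL d (j : ℕ)).count (i : ℕ)

/-- `r` is a return word to `w` in `u`. -/
def ReturnWord (u : ℕ → ℕ) (w r : List ℕ) : Prop :=
  ∃ j ℓ : ℕ, j < ℓ ∧ OccursAt w u j ∧ OccursAt w u ℓ ∧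
    (∀ m, j < m → m < ℓ → ¬ OccursAt w u m) ∧
    r = (List.range (ℓ - j)).map fun t => u (j + t)

/-- `R` is a complete return word to `w` in `u`. -/
def CompleteReturn (u : ℕ → ℕ) (w R : List ℕ) : Prop :=
  ∃ r : List ℕ, ReturnWord u w r ∧ R = r ++ w

/-!
Give the letters of `u` the weights of a left eigenvector of the incidence matrix of `φ`, for its
Perron–Frobenius eigenvalue `Λ`, so that `φ` multiplies the weight of every word by `Λ`. A maximal
repetition, or run, of period `p` consists of `p + n` letters, the last `n` of which repeat letters
seen `p` places before. The image of a run under `φ` extends to a run, and the few letters gained at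
each end depend only on the pair of letters at which the repetition breaks there. Adding to the
weight of the last `n` letters correction terms for these two mismatches yields a potential which
`φ` multiplies exactly by `Λ`, as it does the weight of the period.

Every run whose last `n` letters include a `0` is the image of a shorter run. The remaining ones
have `n ≤ 1`, and for them the potential is at most the weight of the period divided by `3 - Λ`; so
this holds for all runs. It is an equality for the run `DD`, where `D` is the last letter, hence for
all its iterated images.

Weights are asymptotically proportional to lengths, uniformly over all factors: the range of the
ratio length / weight over images of letters under `φ ^ k` shrinks by a factor of at least `Λ / 2`
at each step. As the corrections in the potential are bounded, the ratios `n / p` have superior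
limit `1 / (3 - Λ)`.
-/

/-! ### Repetitions and exponents -/

theorem occursAt_iff_getElem {w : List A} {u : ℕ → A} {j : ℕ} :
    OccursAt w u j ↔ ∀ t (ht : t < w.length), w[t] = u (j + t) := by
  simp [OccursAt, List.ext_getElem_iff]

/-- The factor of `u` of length `p + n` at position `i` has period `p`. -/
def IsRepetition (u : ℕ → A) (i p n : ℕ) : Prop :=
  ∀ t < n, u (i + t) = u (i + p + t)

theorem IsRepetition.apply_mod {u : ℕ → A} {i p n : ℕ} (h : IsRepetition u i p n) {t : ℕ}
    (ht : t < p + n) : u (i + t % p) = u (i + t) := by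
  induction t using Nat.strong_induction_on with
  | _ t ih =>
    rcases Nat.lt_or_ge t p with htp | hpt
    · rw [Nat.mod_eq_of_lt htp]
    rcases Nat.eq_zero_or_pos p with rfl | hp
    · rw [Nat.mod_zero]
    · rw [Nat.mod_eq_sub_mod hpt, ih (t - p) (by omega) (by omega), h (t - p) (by omega),
        show i + p + (t - p) = i + t by omega]

theorem getElem?_flatten_replicate (v : List A) {k t : ℕ} (ht : t < k * v.length) :
    ((List.replicate k v).flatten)[t]? = v[t % v.length]? := by
  induction k generalizing t with
  | zero => simp at ht
  | succ k ih =>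
    rw [List.replicate_succ, List.flatten_cons]
    rcases Nat.lt_or_ge t v.length with h | h
    · rw [List.getElem?_append_left h, Nat.mod_eq_of_lt h]
    · rw [List.getElem?_append_right h, ih (by rw [Nat.succ_mul] at ht; omega),
        ← Nat.mod_eq_sub_mod h]

theorem length_powPref {v : List A} (hv : v ≠ []) (k : ℕ) : (powPref v k).length = k := by
  simpa [powPref] using Nat.le_mul_of_pos_right k (List.length_pos_iff.mpr hv)

theorem occursAt_powPref_iff {v : List A} (hv : v ≠ []) {k : ℕ} {u : ℕ → A} {j : ℕ} :
    OccursAt (powPref v k) u j ↔ ∀ t < k, v[t % v.length]? = some (u (j + t)) := by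
  have hget : ∀ t < k, (powPref v k)[t]? = v[t % v.length]? := fun t ht => by
    rw [powPref, List.getElem?_take_of_lt ht, getElem?_flatten_replicate]
    exact ht.trans_le (Nat.le_mul_of_pos_right k (List.length_pos_iff.mpr hv))
  simp only [occursAt_iff_getElem, length_powPref hv]
  refine forall₂_congr fun t ht => ?_
  rw [← hget t ht, List.getElem?_eq_getElem (by rwa [length_powPref hv]), Option.some_inj]

theorem mem_expSet_iff_of_one_le {u : ℕ → A} {N : ℕ} {x : ℝ} (hx : 1 ≤ x) :
    x ∈ expSet u N ↔
      ∃ i p n : ℕ, 0 < p ∧ N ≤ p ∧ IsRepetition u i p n ∧ x = 1 + (n : ℝ) / p := by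
  constructor
  · rintro ⟨v, k, hv, hN, ⟨j, hj⟩, rfl⟩
    have hv0 : 0 < v.length := List.length_pos_iff.mpr hv
    have hvk : v.length ≤ k := by
      rw [one_le_div (by exact_mod_cast hv0)] at hx
      exact_mod_cast hx
    rw [occursAt_powPref_iff hv] at hj
    refine ⟨j, v.length, k - v.length, hv0, hN, fun t ht => ?_, ?_⟩
    · have hshift := hj (v.length + t) (by omega)
      rw [Nat.add_mod_left, hj t (by omega)] at hshift
      rw [Option.some.inj hshift, add_assoc]
    · rw [Nat.cast_sub hvk]
      field_simp
      ring
  · rintro ⟨i, p, n, hp, hN, h, rfl⟩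
    let v : List A := (List.range p).map fun t => u (i + t)
    have hlen : v.length = p := by simp [v]
    have hv : v ≠ [] := List.length_pos_iff.mp (hlen ▸ hp)
    refine ⟨v, p + n, hv, by rwa [hlen], ⟨i, (occursAt_powPref_iff hv).mpr fun t ht => ?_⟩, ?_⟩
    · rw [hlen, ← h.apply_mod ht]
      simp [v, Nat.mod_lt t hp]
    · rw [hlen]
      push_cast
      field_simp

theorem critExp_ne_top {u : ℕ → A} (hu : BddAbove (expSet u 0)) : critExp u ≠ ⊤ := by
  obtain ⟨b, hb⟩ := hu
  refine ne_top_of_le_ne_top (EReal.coe_ne_top b) (sSup_le ?_)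
  rintro _ ⟨x, hx, rfl⟩
  exact EReal.coe_le_coe_iff.mpr (hb hx)

theorem acritExp_le {u : ℕ → A} (hu : BddAbove (expSet u 0)) {N : ℕ} {x : ℝ}
    (hx : ∀ y ∈ expSet u N, y ≤ x) : acritExp u ≤ x := by
  rw [acritExp, if_neg (critExp_ne_top hu)]
  refine iInf_le_of_le N (sSup_le ?_)
  rintro _ ⟨y, hy, rfl⟩
  exact EReal.coe_le_coe_iff.mpr (hx y hy)

theorem le_acritExp {u : ℕ → A} {x : ℝ} (hx : ∀ N, ∃ y ∈ expSet u N, x ≤ y) :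
    (x : EReal) ≤ acritExp u := by
  unfold acritExp
  split_ifs
  · exact le_top
  · refine le_iInf fun N => ?_
    obtain ⟨y, hy, hxy⟩ := hx N
    exact (EReal.coe_le_coe_iff.mpr hxy).trans (le_sSup ⟨y, hy, rfl⟩)

theorem acritExp_le_one_add {u : ℕ → A} {c : ℝ} (hc : 0 ≤ c)
    (h : ∀ c' > c, ∃ C, ∀ i p n, 0 < p → IsRepetition u i p n → (n : ℝ) ≤ c' * p + C) :
    acritExp u ≤ ((1 + c : ℝ) : EReal) := by
  have hu : BddAbove (expSet u 0) := by
    obtain ⟨C, hC⟩ := h (c + 1) (lt_add_one c)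
    refine ⟨1 + (c + 1 + |C|), fun x hx => ?_⟩
    rcases le_total x 1 with hx1 | hx1
    · linarith [abs_nonneg C]
    obtain ⟨i, p, n, hp, -, hrep, rfl⟩ := (mem_expSet_iff_of_one_le hx1).mp hx
    have hp1 : (1 : ℝ) ≤ p := Nat.one_le_cast.mpr hp
    rw [add_le_add_iff_left, div_le_iff₀ (by linarith)]
    nlinarith [hC i p n hp hrep, le_abs_self C, abs_nonneg C]
  refine EReal.le_of_forall_lt_iff_le.mp fun x hx => ?_
  have hcx : c < x - 1 := by linarith [EReal.coe_lt_coe_iff.mp hx]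
  obtain ⟨c', hc', hcx'⟩ := exists_between hcx
  obtain ⟨C, hC⟩ := h c' hc'
  obtain ⟨N, hN⟩ := exists_nat_ge (C / (x - 1 - c'))
  refine acritExp_le hu (N := N) fun y hy => ?_
  rcases le_total y 1 with hy1 | hy1
  · linarith
  obtain ⟨i, p, n, hp, hNp, hrep, rfl⟩ := (mem_expSet_iff_of_one_le hy1).mp hy
  have hCp := (div_le_iff₀' (sub_pos.mpr hcx')).mp (hN.trans (Nat.cast_le.mpr hNp))
  rw [← le_sub_iff_add_le', div_le_iff₀ (Nat.cast_pos.mpr hp)]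
  linarith [hC i p n hp hrep]

theorem one_add_le_acritExp {u : ℕ → A} {c : ℝ}
    (h : ∀ c' < c, ∃ C, ∀ N, ∃ i p n, N < p ∧ IsRepetition u i p n ∧ c' * p ≤ n + C) :
    ((1 + c : ℝ) : EReal) ≤ acritExp u := by
  refine EReal.ge_of_forall_gt_iff_ge.mp fun x hx => ?_
  have hxc : x - 1 < c := by linarith [EReal.coe_lt_coe_iff.mp hx]
  obtain ⟨c', hxc', hc'⟩ := exists_between hxc
  obtain ⟨C, hC⟩ := h c' hc'
  obtain ⟨M, hM⟩ := exists_nat_ge (C / (c' - (x - 1)))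
  refine le_acritExp fun N => ?_
  obtain ⟨i, p, n, hNp, hrep, hn⟩ := hC (max M N)
  have hp : 0 < p := by omega
  refine ⟨1 + n / p, (mem_expSet_iff_of_one_le (le_add_of_nonneg_right (by positivity))).mpr
    ⟨i, p, n, hp, by omega, hrep, rfl⟩, ?_⟩
  have hCp := (div_le_iff₀' (sub_pos.mpr hxc')).mp
    (hM.trans (Nat.cast_le.mpr (show M ≤ p by omega)))
  rw [← sub_le_iff_le_add', le_div_iff₀ (Nat.cast_pos.mpr hp)]
  linarith

/-! ### Runs -/

/-- A run, that is, a maximal repetition: the factor of `u` of length `p + n` at position `i` has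
period `p`, and it cannot be extended to either side without losing this period. -/
structure IsRun (u : ℕ → A) (i p n : ℕ) : Prop where
  period_pos : 0 < p
  repetition : IsRepetition u i p n
  right_ne : u (i + n) ≠ u (i + p + n)
  left_ne : ∀ k, k + 1 = i → u k ≠ u (k + p)

namespace IsRun

variable {u : ℕ → A} {i i' p n n' z : ℕ}

theorem start_le (h : IsRun u i p n) (h' : IsRun u i' p n') (hz : i ≤ z) (hz' : z ≤ i' + n') :
    i ≤ i' := by
  by_contra! hlt
  refine h.left_ne (i - 1) (by omega) ?_
  have := h'.repetition (i - 1 - i') (by omega)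
  rwa [show i' + (i - 1 - i') = i - 1 by omega,
    show i' + p + (i - 1 - i') = i - 1 + p by omega] at this

theorem length_le (h : IsRun u i p n) (h' : IsRun u i p n') : n ≤ n' :=
  not_lt.mp fun hlt => h'.right_ne (h.repetition n' hlt)

theorem eq_of_mem (h : IsRun u i p n) (h' : IsRun u i' p n') (hz : i ≤ z) (hzn : z ≤ i + n)
    (hz' : i' ≤ z) (hzn' : z ≤ i' + n') : i = i' ∧ n = n' := by
  obtain rfl : i = i' := le_antisymm (h.start_le h' hz hzn') (h'.start_le h hz' hzn)
  exact ⟨rfl, le_antisymm (h.length_le h') (h'.length_le h)⟩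

end IsRun

theorem IsRepetition.exists_isRun {u : ℕ → A} {i p n : ℕ} (h : IsRepetition u i p n)
    (hp : 0 < p) (hu : ∀ i, ∃ t, u (i + t) ≠ u (i + p + t)) :
    ∃ i' n', IsRun u i' p n' ∧ i' ≤ i ∧ i + n ≤ i' + n' := by
  classical
  have hstart : ∃ k, k ≤ i ∧ ∀ s, k ≤ s → s < i → u s = u (s + p) :=
    ⟨i, le_rfl, fun s hs hs' => by omega⟩
  obtain ⟨hi', hmatch⟩ := Nat.find_spec hstart
  have hleast : ∀ k < Nat.find hstart, ¬ _ := fun k => Nat.find_min hstart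
  generalize Nat.find hstart = i' at hi' hmatch hleast
  have hne := Nat.find_spec (hu i')
  have hrep : IsRepetition u i' p (Nat.find (hu i')) := fun t ht =>
    not_not.mp (Nat.find_min (hu i') ht)
  generalize Nat.find (hu i') = n' at hne hrep
  refine ⟨i', n', ⟨hp, hrep, hne, fun k hk heq => hleast k (by omega) ⟨by omega, ?_⟩⟩, hi', ?_⟩
  · intro s hs hsi
    rcases hs.eq_or_lt with rfl | hlt
    · exact heq
    · exact hmatch s (by omega) hsi
  · by_contra! hlt
    apply hne
    rcases Nat.lt_or_ge (i' + n') i with hlti | hge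
    · rw [hmatch (i' + n') (by omega) hlti, add_right_comm]
    · have := h (i' + n' - i) (by omega)
      rwa [show i + (i' + n' - i) = i' + n' by omega,
        show i + p + (i' + n' - i) = i' + p + n' by omega] at this

/-! ### Block structure of the fixed point -/

/-- The position at which the image of the `m`-th letter of `u` under `φ_{D+1}` starts. -/
def blockStart (D : ℕ) (u : ℕ → ℕ) (m : ℕ) : ℕ :=
  (phiW (D + 1) ((List.range m).map u)).length

/-- The arithmetic form of `φ_{D+1}(u) = u`: the sequence `u` over `{0, …, D}` is cut at the
positions `P 0 = 0 < P 1 < ⋯` into blocks, and its `m`-th block is the image of its `m`-th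
letter. -/
structure PhiBlocks (D : ℕ) (u P : ℕ → ℕ) : Prop where
  one_le : 1 ≤ D
  start_zero : P 0 = 0
  apply_start : ∀ m, u (P m) = 0
  small_or_top : ∀ m,
    (u m < D ∧ P (m + 1) = P m + 2 ∧ u (P m + 1) = u m + 1) ∨
    (u m = D ∧ P (m + 1) = P m + 3 ∧ u (P m + 1) = D ∧ u (P m + 2) = D)

theorem phiW_map_range_succ (d : ℕ) (u : ℕ → ℕ) (m : ℕ) :
    phiW d ((List.range (m + 1)).map u) = phiW d ((List.range m).map u) ++ phiL d (u m) := by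
  simp [phiW, List.range_succ]

theorem blockStart_succ (D : ℕ) (u : ℕ → ℕ) (m : ℕ) :
    blockStart D u (m + 1) = blockStart D u m + (phiL (D + 1) (u m)).length := by
  simp [blockStart, phiW_map_range_succ]

theorem exists_block_of_lt_succ {P : ℕ → ℕ} (h0 : P 0 = 0) (hP : ∀ m, P m < P (m + 1)) (x : ℕ) :
    ∃ m, P m ≤ x ∧ x < P (m + 1) := by
  induction x with
  | zero => exact ⟨0, h0.le, by have := hP 0; omega⟩
  | succ x ih =>
    obtain ⟨m, hm, hm'⟩ := ih
    rcases Nat.lt_or_ge (x + 1) (P (m + 1)) with h | h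
    · exact ⟨m, by omega, h⟩
    · exact ⟨m + 1, h, by have := hP (m + 1); omega⟩

namespace IsPhiFixed

variable {D : ℕ} {u : ℕ → ℕ}

theorem apply_blockStart_add (hu : IsPhiFixed (D + 1) u) (m : ℕ) {t : ℕ}
    (ht : t < (phiL (D + 1) (u m)).length) :
    u (blockStart D u m + t) = (phiL (D + 1) (u m))[t] := by
  unfold blockStart
  have hprefix := occursAt_iff_getElem.mp (hu.2 (m + 1))
  simp only [phiW_map_range_succ, List.length_append] at hprefix
  have := hprefix ((phiW (D + 1) ((List.range m).map u)).length + t) (Nat.add_lt_add_left ht _)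
  rw [zero_add] at this
  rw [← this, List.getElem_append_right (Nat.le_add_right _ _)]
  simp

theorem apply_le (hu : IsPhiFixed (D + 1) u) (x : ℕ) : u x ≤ D := by
  obtain ⟨m, hm, hm'⟩ := exists_block_of_lt_succ (P := blockStart D u) rfl
    (fun m => by rw [blockStart_succ]; unfold phiL; split_ifs <;> simp) x
  obtain ⟨t, rfl⟩ := Nat.exists_eq_add_of_le hm
  have ht : t < (phiL (D + 1) (u m)).length := by rw [blockStart_succ] at hm'; omega
  rw [hu.apply_blockStart_add m ht]
  have hletter : ∀ a ∈ phiL (D + 1) (u m), a ≤ D := by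
    unfold phiL
    split_ifs
    · intro a ha
      simp only [List.mem_cons, List.not_mem_nil, or_false] at ha
      omega
    · simp
  exact hletter _ (List.getElem_mem ht)

theorem phiBlocks (hu : IsPhiFixed (D + 1) u) (hD : 1 ≤ D) : PhiBlocks D u (blockStart D u) where
  one_le := hD
  start_zero := rfl
  apply_start m := by
    have h0 : 0 < (phiL (D + 1) (u m)).length := by unfold phiL; split_ifs <;> simp
    rw [← add_zero (blockStart D u m), hu.apply_blockStart_add m h0]
    unfold phiL
    split_ifs <;> rfl
  small_or_top m := by
    have hletter := fun {t} => hu.apply_blockStart_add m (t := t)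
    have hsucc := blockStart_succ D u m
    rcases (hu.apply_le m).lt_or_eq with h | h
    · have himage : phiL (D + 1) (u m) = [0, u m + 1] := if_pos h
      simp only [himage] at hletter hsucc
      exact Or.inl ⟨h, hsucc, hletter (t := 1) (by simp)⟩
    · have himage : phiL (D + 1) (u m) = [0, D, D] := by simp [phiL, h]
      simp only [himage] at hletter hsucc
      exact Or.inr ⟨h, hsucc, hletter (t := 1) (by simp), hletter (t := 2) (by simp)⟩

end IsPhiFixed

namespace PhiBlocks

variable {D : ℕ} {u P : ℕ → ℕ}

theorem apply_le (B : PhiBlocks D u P) (m : ℕ) : u m ≤ D := by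
  rcases B.small_or_top m with ⟨h, -⟩ | ⟨h, -⟩
  exacts [h.le, h.le]

theorem apply_zero (B : PhiBlocks D u P) : u 0 = 0 := by
  simpa only [B.start_zero] using B.apply_start 0

theorem exists_apply_eq_top (B : PhiBlocks D u P) : ∃ x, u x = D := by
  suffices ∀ k ≤ D, ∃ x, u x = k from this D le_rfl
  intro k
  induction k with
  | zero => exact fun _ => ⟨0, B.apply_zero⟩
  | succ k ih =>
    intro hk
    obtain ⟨x, hx⟩ := ih (by omega)
    rcases B.small_or_top x with h | h
    · exact ⟨P x + 1, by omega⟩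
    · omega

theorem start_add_two_le (B : PhiBlocks D u P) (m : ℕ) : P m + 2 ≤ P (m + 1) := by
  rcases B.small_or_top m with h | h <;> omega

theorem start_succ_le (B : PhiBlocks D u P) (m : ℕ) : P (m + 1) ≤ P m + 3 := by
  rcases B.small_or_top m with h | h <;> omega

theorem start_add_two_mul_le (B : PhiBlocks D u P) (m k : ℕ) : P m + 2 * k ≤ P (m + k) := by
  induction k with
  | zero => simp
  | succ k ih => have := B.start_add_two_le (m + k); rw [← add_assoc]; omega

theorem strictMono (B : PhiBlocks D u P) : StrictMono P :=
  strictMono_nat_of_lt_succ fun m => by have := B.start_add_two_le m; omega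

theorem exists_block (B : PhiBlocks D u P) (x : ℕ) : ∃ m, P m ≤ x ∧ x < P (m + 1) :=
  exists_block_of_lt_succ B.start_zero (fun _ => B.strictMono (Nat.lt_succ_self _)) x

theorem exists_eq_start (B : PhiBlocks D u P) {x : ℕ} (hx : u x = 0) : ∃ m, x = P m := by
  have hD := B.one_le
  obtain ⟨m, hm, hm'⟩ := B.exists_block x
  refine ⟨m, ?_⟩
  by_contra hne
  rcases B.small_or_top m with h | h
  · obtain rfl : x = P m + 1 := by omega
    omega
  · obtain rfl | rfl : x = P m + 1 ∨ x = P m + 2 := by omega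
    all_goals omega

theorem eq_zero_or_top_of_ne_zero (B : PhiBlocks D u P) {x : ℕ} (hx : u x ≠ 0) :
    u (x + 1) = 0 ∨ (u x = D ∧ u (x + 1) = D ∧ u (x + 2) = 0) := by
  obtain ⟨m, hm, hm'⟩ := B.exists_block x
  have hstart := B.apply_start m
  have hnext := B.apply_start (m + 1)
  rcases B.small_or_top m with h | h <;> rw [h.2.1] at hnext hm'
  · obtain rfl | rfl : x = P m ∨ x = P m + 1 := by omega
    exacts [absurd hstart hx, Or.inl hnext]
  · obtain rfl | rfl | rfl : x = P m ∨ x = P m + 1 ∨ x = P m + 2 := by omega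
    exacts [absurd hstart hx, Or.inr ⟨h.2.2.1, h.2.2.2, hnext⟩, Or.inl hnext]

theorem block_eq_of_apply_eq (B : PhiBlocks D u P) {a b : ℕ} (h : u a = u b) :
    P (a + 1) + P b = P (b + 1) + P a ∧
      ∀ x, P a + x < P (a + 1) → u (P a + x) = u (P b + x) := by
  have ha := B.apply_start a
  have hb := B.apply_start b
  rcases B.small_or_top a with h₁ | h₁ <;> rcases B.small_or_top b with h₂ | h₂ <;>
    refine ⟨by omega, fun x hx => ?_⟩
  · obtain rfl | rfl : x = 0 ∨ x = 1 := by omega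
    exacts [ha.trans hb.symm, by omega]
  · omega
  · omega
  · obtain rfl | rfl | rfl : x = 0 ∨ x = 1 ∨ x = 2 := by omega
    exacts [ha.trans hb.symm, by omega, by omega]

theorem image_eq_of_forall_apply_eq (B : PhiBlocks D u P) {a b n : ℕ}
    (h : ∀ k < n, u (a + k) = u (b + k)) :
    P (a + n) + P b = P (b + n) + P a ∧
      ∀ x, P a + x < P (a + n) → u (P a + x) = u (P b + x) := by
  induction n with
  | zero => exact ⟨by simp [add_comm], fun x hx => by simp at hx⟩
  | succ n ih =>
    obtain ⟨hlen, heq⟩ := ih fun k hk => h k (by omega)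
    obtain ⟨hlen', heq'⟩ := B.block_eq_of_apply_eq (h n (by omega))
    rw [← add_assoc, ← add_assoc]
    refine ⟨by omega, fun x hx => ?_⟩
    rcases Nat.lt_or_ge (P a + x) (P (a + n)) with hlt | hge
    · exact heq x hlt
    · have := B.start_add_two_mul_le a n
      have := B.start_add_two_mul_le b n
      have := heq' (P a + x - P (a + n)) (by omega)
      rwa [show P (a + n) + (P a + x - P (a + n)) = P a + x by omega,
        show P (b + n) + (P a + x - P (a + n)) = P b + x by omega] at this

/- The images of two distinct letters both begin with `0`. Their second letters differ too, except
for `φ(D - 1) = 0D` and `φ(D) = 0DD`, which differ (the former being continued by `0`) in the third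
one. Reading from the right, the exceptional pair shares its last letter `D`. -/

theorem right_mismatch (B : PhiBlocks D u P) {x y : ℕ} (h : u x ≠ u y) :
    (u (P x + 1) ≠ u (P y + 1) ∧ min (u (P x + 1)) (u (P y + 1)) = min (u x) (u y) + 1) ∨
    (min (u x) (u y) + 1 = D ∧ u (P x + 1) = D ∧ u (P y + 1) = D ∧
      u (P x + 2) ≠ u (P y + 2) ∧ min (u (P x + 2)) (u (P y + 2)) = 0) := by
  have hD := B.one_le
  have hx := B.apply_start (x + 1)
  have hy := B.apply_start (y + 1)
  rcases B.small_or_top x with h₁ | h₁ <;> rcases B.small_or_top y with h₂ | h₂ <;>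
    rw [h₁.2.1] at hx <;> rw [h₂.2.1] at hy <;> omega

theorem left_mismatch (B : PhiBlocks D u P) {x y : ℕ} (h : u x ≠ u y) :
    (u (P (x + 1) - 1) ≠ u (P (y + 1) - 1) ∧
      min (u (P (x + 1) - 1)) (u (P (y + 1) - 1)) = min (u x) (u y) + 1) ∨
    (min (u x) (u y) + 1 = D ∧ u (P (x + 1) - 1) = D ∧ u (P (y + 1) - 1) = D ∧
      u (P (x + 1) - 2) ≠ u (P (y + 1) - 2) ∧
      min (u (P (x + 1) - 2)) (u (P (y + 1) - 2)) = 0) := by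
  have hD := B.one_le
  have hx := B.apply_start x
  have hy := B.apply_start y
  rcases B.small_or_top x with h₁ | h₁ <;> rcases B.small_or_top y with h₂ | h₂ <;>
    simp only [h₁.2.1, h₂.2.1, Nat.add_sub_cancel, Nat.reduceSubDiff] <;> omega

theorem apply_eq_of_image_eq (B : PhiBlocks D u P) {a b : ℕ}
    (h : ∀ x, u (P a + x) = u (P b + x)) (n : ℕ) : u (a + n) = u (b + n) := by
  induction n using Nat.strong_induction_on with
  | _ n ih =>
    by_contra hne
    have hlen := (B.image_eq_of_forall_apply_eq ih).1
    have hshift : ∀ e, u (P (a + n) + e) = u (P (b + n) + e) := fun e => by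
      have := B.start_add_two_mul_le a n
      have := h (P (a + n) - P a + e)
      rwa [show P a + (P (a + n) - P a + e) = P (a + n) + e by omega,
        show P b + (P (a + n) - P a + e) = P (b + n) + e by omega] at this
    rcases B.right_mismatch hne with hm | hm
    · exact hm.1 (hshift 1)
    · exact hm.2.2.2.1 (hshift 2)

/- A period of a tail of `u` is a difference `P (i + q) - P i`; then `q < p` is a period of a tail
as well, so there is no smallest period. -/
theorem not_eventually_periodic (B : PhiBlocks D u P) {p : ℕ} (hp : 0 < p) (i : ℕ) :
    ∃ t, u (i + t) ≠ u (i + p + t) := by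
  induction p using Nat.strong_induction_on generalizing i with
  | _ p ih =>
    by_contra! hper
    have hi := B.start_add_two_mul_le 0 i
    rw [B.start_zero, zero_add, zero_add] at hi
    have htail : ∀ x, u (P i + x) = u (P i + p + x) := fun x => by
      have := hper (P i - i + x)
      rwa [show i + (P i - i + x) = P i + x by omega,
        show i + p + (P i - i + x) = P i + p + x by omega] at this
    obtain ⟨m, hm⟩ := B.exists_eq_start ((htail 0).symm.trans (B.apply_start i))
    rw [add_zero] at hm
    have him : i < m := B.strictMono.lt_iff_lt.mp (by omega)
    obtain ⟨q, rfl⟩ := Nat.exists_eq_add_of_le him.le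
    have hq := B.start_add_two_mul_le i q
    obtain ⟨t, ht⟩ := ih q (by omega) (by omega) i
    exact ht (B.apply_eq_of_image_eq (fun x => hm ▸ htail x) t)

end PhiBlocks

/-! ### Letter weights -/

/-- `Λ` is the root in `(2, 3)` of `x ^ D * (x - 2) ^ 2 = 1`; it is the Perron–Frobenius eigenvalue
of the incidence matrix of `φ_{D+1}`. -/
structure IsPerronRoot (D : ℕ) (Λ : ℝ) : Prop where
  two_lt : 2 < Λ
  lt_three : Λ < 3
  pow_mul_sq : Λ ^ D * (Λ - 2) ^ 2 = 1

/-- The weight of the letter `i`: the coordinates of the left eigenvector, for the eigenvalue `Λ`,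
of the incidence matrix of `φ_{D+1}`, normalised so that the letter `0` has weight `1`. -/
noncomputable def weight (Λ : ℝ) (i : ℕ) : ℝ := (Λ ^ i * (Λ - 2) + 1) / (Λ - 1)

/-- The coefficient of the correction terms `Λ ^ a` in the potential of a run. It is dictated by the
relation `mismatchCoeff Λ * Λ ^ D = weight Λ D + mismatchCoeff Λ`, which makes `φ` multiply the
potential by `Λ`. -/
noncomputable def mismatchCoeff (Λ : ℝ) : ℝ := (Λ - 2) / ((3 - Λ) * (Λ - 1))

section Weight

variable {Λ : ℝ}

theorem weight_zero (hΛ : 2 < Λ) : weight Λ 0 = 1 := by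
  have : Λ - 1 ≠ 0 := by linarith
  rw [weight, div_eq_one_iff_eq this]
  ring

theorem weight_succ (hΛ : 2 < Λ) (i : ℕ) : weight Λ (i + 1) = Λ * weight Λ i - 1 := by
  have : Λ - 1 ≠ 0 := by linarith
  unfold weight
  field_simp
  ring

theorem one_le_weight (hΛ : 2 < Λ) (i : ℕ) : 1 ≤ weight Λ i := by
  have := one_le_pow₀ (n := i) (show 1 ≤ Λ by linarith)
  rw [weight, le_div_iff₀ (by linarith)]
  nlinarith

theorem weight_monotone (hΛ : 2 < Λ) : Monotone (weight Λ) :=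
  monotone_nat_of_le_succ fun i => by
    rw [weight_succ hΛ]
    nlinarith [one_le_weight hΛ i]

theorem mismatchCoeff_pos (hΛ : 2 < Λ) (hΛ' : Λ < 3) : 0 < mismatchCoeff Λ :=
  div_pos (by linarith) (mul_pos (by linarith) (by linarith))

theorem weight_div (hΛ : 2 < Λ) (hΛ' : Λ < 3) (k : ℕ) :
    weight Λ k / (3 - Λ) = 1 / (Λ - 1) + mismatchCoeff Λ * (1 + Λ ^ k) := by
  have h1 : Λ - 1 ≠ 0 := by linarith
  have h3 : 3 - Λ ≠ 0 := by linarith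
  unfold weight mismatchCoeff
  field_simp
  ring

end Weight

namespace IsPerronRoot

variable {D : ℕ} {Λ : ℝ}

theorem sub_two_mul_weight (h : IsPerronRoot D Λ) : (Λ - 2) * weight Λ D = 1 := by
  have := h.two_lt
  rw [weight, mul_div_assoc', div_eq_one_iff_eq (by linarith)]
  linear_combination h.pow_mul_sq

theorem weight_top (h : IsPerronRoot D Λ) : weight Λ D = 1 / (Λ - 2) :=
  eq_one_div_of_mul_eq_one_right h.sub_two_mul_weight

theorem mismatchCoeff_mul_pow (h : IsPerronRoot D Λ) :
    mismatchCoeff Λ * Λ ^ D = weight Λ D + mismatchCoeff Λ := by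
  have h1 : Λ - 1 ≠ 0 := by linarith [h.two_lt]
  have h2 : Λ - 2 ≠ 0 := by linarith [h.two_lt]
  have h3 : 3 - Λ ≠ 0 := by linarith [h.lt_three]
  have hpow : Λ ^ D = 1 / (Λ - 2) ^ 2 := eq_one_div_of_mul_eq_one_left h.pow_mul_sq
  rw [h.weight_top, hpow, mismatchCoeff]
  field_simp
  ring

theorem weight_top_div (h : IsPerronRoot D Λ) :
    weight Λ D / (3 - Λ) = weight Λ D + 1 / (Λ - 1) + 2 * mismatchCoeff Λ := by
  rw [weight_div h.two_lt h.lt_three, mul_add, h.mismatchCoeff_mul_pow]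
  ring

end IsPerronRoot

/-- The sum of `f` over the first `m` letters of `u`. -/
def prefixSum (f : ℕ → ℝ) (u : ℕ → ℕ) (m : ℕ) : ℝ := ∑ t ∈ Finset.range m, f (u t)

/-- The sum of `f` over the letters of the image of the letter `x` under `φ_{D+1}`, divided by `Λ`;
this is the action on `f` of the transpose of the incidence matrix, normalised so as to fix the
vector of weights. -/
noncomputable def renormalize (D : ℕ) (Λ : ℝ) (f : ℕ → ℝ) (x : ℕ) : ℝ :=
  (f 0 + if x < D then f (x + 1) else 2 * f D) / Λ

section PrefixSum

variable {f : ℕ → ℝ} {u : ℕ → ℕ}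

theorem prefixSum_zero : prefixSum f u 0 = 0 := Finset.sum_range_zero _

theorem prefixSum_succ (m : ℕ) : prefixSum f u (m + 1) = prefixSum f u m + f (u m) :=
  Finset.sum_range_succ _ m

theorem prefixSum_add_sub_congr {a b n : ℕ} (h : ∀ k < n, u (a + k) = u (b + k)) :
    prefixSum f u (a + n) - prefixSum f u a = prefixSum f u (b + n) - prefixSum f u b := by
  simp only [prefixSum, Finset.sum_range_add, add_sub_cancel_left]
  exact Finset.sum_congr rfl fun k hk => by rw [h k (Finset.mem_range.mp hk)]

theorem prefixSum_monotone (h : ∀ m, 0 ≤ f (u m)) : Monotone (prefixSum f u) :=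
  monotone_nat_of_le_succ fun m => by
    rw [prefixSum_succ]
    exact le_add_of_nonneg_right (h m)

end PrefixSum

theorem PhiBlocks.prefixSum_start {D : ℕ} {u P : ℕ → ℕ} {Λ : ℝ} (B : PhiBlocks D u P) (hΛ : Λ ≠ 0)
    (f : ℕ → ℝ) (m : ℕ) : prefixSum f u (P m) = Λ * prefixSum (renormalize D Λ f) u m := by
  induction m with
  | zero => simp only [B.start_zero, prefixSum_zero, mul_zero]
  | succ m ih =>
    rw [prefixSum_succ, mul_add, ← ih, renormalize, mul_div_cancel₀ _ hΛ]
    rcases B.small_or_top m with ⟨hm, hP, h₁⟩ | ⟨hm, hP, h₁, h₂⟩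
    · rw [hP, prefixSum_succ, prefixSum_succ, B.apply_start, h₁, if_pos hm]
      ring
    · rw [hP, prefixSum_succ, prefixSum_succ, prefixSum_succ, B.apply_start, h₁, h₂, hm,
        if_neg (lt_irrefl D)]
      ring

theorem IsPerronRoot.renormalize_weight {D : ℕ} {Λ : ℝ} (h : IsPerronRoot D Λ) {x : ℕ}
    (hx : x ≤ D) : renormalize D Λ (weight Λ) x = weight Λ x := by
  rw [renormalize, weight_zero h.two_lt, div_eq_iff (by linarith [h.two_lt])]
  split_ifs with hlt
  · rw [weight_succ h.two_lt]
    ring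
  · obtain rfl : x = D := by omega
    linarith [h.sub_two_mul_weight]

theorem PhiBlocks.prefixSum_weight_start {D : ℕ} {u P : ℕ → ℕ} {Λ : ℝ} (B : PhiBlocks D u P)
    (h : IsPerronRoot D Λ) (m : ℕ) :
    prefixSum (weight Λ) u (P m) = Λ * prefixSum (weight Λ) u m := by
  rw [B.prefixSum_start (by linarith [h.two_lt])]
  congr 1
  exact Finset.sum_congr rfl fun t _ => h.renormalize_weight (B.apply_le t)

/-! ### The potential of a run -/

/-- The contribution to the potential of a run of the mismatch `a ≠ b` at one of its ends. -/
noncomputable def mismatchPotential (Λ : ℝ) (a b : ℕ) : ℝ := mismatchCoeff Λ * Λ ^ min a b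

/-- The contribution to the potential of the left end of the run with start `i` and period `p`.
There is no mismatch, hence no contribution, if the run is a prefix of `u`. -/
noncomputable def leftPotential (Λ : ℝ) (u : ℕ → ℕ) (i p : ℕ) : ℝ :=
  if i = 0 then 0 else mismatchPotential Λ (u (i - 1)) (u (i - 1 + p))

/-- The potential of the run `(i, p, n)`: the weight of its last `n` letters, corrected at both ends
in such a way that `φ` multiplies the potential by `Λ`. -/
noncomputable def runPotential (Λ : ℝ) (u : ℕ → ℕ) (i p n : ℕ) : ℝ :=
  prefixSum (weight Λ) u (i + n) - prefixSum (weight Λ) u i + 1 / (Λ - 1) +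
    leftPotential Λ u i p + mismatchPotential Λ (u (i + n)) (u (i + p + n))

theorem leftPotential_zero (Λ : ℝ) (u : ℕ → ℕ) (p : ℕ) : leftPotential Λ u 0 p = 0 := if_pos rfl

theorem leftPotential_succ (Λ : ℝ) (u : ℕ → ℕ) (i p : ℕ) :
    leftPotential Λ u (i + 1) p = mismatchPotential Λ (u i) (u (i + p)) := if_neg i.succ_ne_zero

theorem mismatchPotential_of_min_eq_succ {Λ : ℝ} {a b a' b' : ℕ} (h : min a' b' = min a b + 1) :
    mismatchPotential Λ a' b' = Λ * mismatchPotential Λ a b := by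
  rw [mismatchPotential, mismatchPotential, h, pow_succ]
  ring

theorem mismatchPotential_pos {Λ : ℝ} (hΛ : 2 < Λ) (hΛ' : Λ < 3) (a b : ℕ) :
    0 < mismatchPotential Λ a b :=
  mul_pos (mismatchCoeff_pos hΛ hΛ') (pow_pos (by linarith) _)

theorem leftPotential_nonneg {Λ : ℝ} (hΛ : 2 < Λ) (hΛ' : Λ < 3) (u : ℕ → ℕ) (i p : ℕ) :
    0 ≤ leftPotential Λ u i p := by
  unfold leftPotential
  split_ifs
  exacts [le_rfl, (mismatchPotential_pos hΛ hΛ' _ _).le]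

theorem prefixSum_sub_le_runPotential {Λ : ℝ} (hΛ : 2 < Λ) (hΛ' : Λ < 3) (u : ℕ → ℕ)
    (i p n : ℕ) :
    prefixSum (weight Λ) u (i + n) - prefixSum (weight Λ) u i ≤ runPotential Λ u i p n := by
  have hconst : 0 < 1 / (Λ - 1) := div_pos one_pos (by linarith)
  have hleft := leftPotential_nonneg hΛ hΛ' u i p
  have hright := mismatchPotential_pos hΛ hΛ' (u (i + n)) (u (i + p + n))
  unfold runPotential
  linarith

theorem IsPerronRoot.weight_add_mismatchPotential {D : ℕ} {Λ : ℝ} (h : IsPerronRoot D Λ)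
    {a b a' b' : ℕ} (hab : min a b + 1 = D) (hab' : min a' b' = 0) :
    weight Λ D + mismatchPotential Λ a' b' = Λ * mismatchPotential Λ a b := by
  have := h.mismatchCoeff_mul_pow
  rw [← hab, pow_succ] at this
  rw [mismatchPotential, mismatchPotential, hab', pow_zero, ← hab]
  linarith

namespace PhiBlocks

variable {D : ℕ} {u P : ℕ → ℕ} {Λ : ℝ}

theorem exists_right_extension (B : PhiBlocks D u P) (h : IsPerronRoot D Λ) {x y : ℕ}
    (hxy : u x ≠ u y) :
    ∃ e, 0 < e ∧ (∀ k < e, u (P x + k) = u (P y + k)) ∧ u (P x + e) ≠ u (P y + e) ∧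
      prefixSum (weight Λ) u (P x + e) + mismatchPotential Λ (u (P x + e)) (u (P y + e)) =
        Λ * (prefixSum (weight Λ) u x + mismatchPotential Λ (u x) (u y)) + 1 := by
  have hstart : u (P x) = u (P y) := (B.apply_start x).trans (B.apply_start y).symm
  have hweight : prefixSum (weight Λ) u (P x + 1) = Λ * prefixSum (weight Λ) u x + 1 := by
    rw [prefixSum_succ, B.apply_start, weight_zero h.two_lt, B.prefixSum_weight_start h]
  rcases B.right_mismatch hxy with ⟨hne, hmin⟩ | ⟨hmin, hx, hy, hne, hmin'⟩
  · refine ⟨1, one_pos, fun k hk => ?_, hne, ?_⟩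
    · obtain rfl : k = 0 := by omega
      exact hstart
    · rw [hweight, mismatchPotential_of_min_eq_succ hmin]
      ring
  · refine ⟨2, two_pos, fun k hk => ?_, hne, ?_⟩
    · obtain rfl | rfl : k = 0 ∨ k = 1 := by omega
      exacts [hstart, hx.trans hy.symm]
    · rw [← add_assoc (P x) 1 1, prefixSum_succ, hweight, hx, mul_add,
        ← h.weight_add_mismatchPotential hmin hmin']
      ring

theorem exists_left_extension (B : PhiBlocks D u P) (h : IsPerronRoot D Λ) {i p q : ℕ}
    (hleft : ∀ k, k + 1 = i → u k ≠ u (k + p)) (hq : P (i + p) = P i + q) :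
    ∃ i' e, P i = i' + e ∧ (∀ k < e, u (i' + k) = u (i' + q + k)) ∧
      (∀ k, k + 1 = i' → u k ≠ u (k + q)) ∧
      prefixSum (weight Λ) u (P i) - prefixSum (weight Λ) u i' + leftPotential Λ u i' q =
        Λ * leftPotential Λ u i p := by
  rcases i with _ | x
  · exact ⟨0, 0, B.start_zero, by simp, by simp, by simp [B.start_zero, leftPotential_zero]⟩
  have hmismatch := B.left_mismatch (hleft x rfl)
  obtain ⟨z, hz⟩ := Nat.exists_eq_add_of_le' (show 2 ≤ P (x + 1) by
    have := B.start_add_two_le x; omega)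
  rw [show x + p + 1 = x + 1 + p by omega, hq, hz, show z + 2 + q - 1 = z + 1 + q by omega,
    show z + 2 + q - 2 = z + q by omega, Nat.add_sub_cancel, show z + 2 - 1 = z + 1 from rfl]
    at hmismatch
  rw [hz, leftPotential_succ]
  rcases hmismatch with ⟨hne, hmin⟩ | ⟨hmin, hx, hy, hne, hmin'⟩
  · refine ⟨z + 2, 0, rfl, by simp, fun k hk => ?_, ?_⟩
    · obtain rfl : k = z + 1 := by omega
      exact hne
    · rw [leftPotential_succ, mismatchPotential_of_min_eq_succ hmin]
      ring
  · refine ⟨z + 1, 1, rfl, fun k hk => ?_, fun k hk => ?_, ?_⟩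
    · obtain rfl : k = 0 := by omega
      exact hx.trans hy.symm
    · obtain rfl : k = z := by omega
      exact hne
    · rw [leftPotential_succ, prefixSum_succ, hx, ← h.weight_add_mismatchPotential hmin hmin']
      ring

theorem exists_image_run (B : PhiBlocks D u P) (h : IsPerronRoot D Λ) {i p n q : ℕ}
    (hR : IsRun u i p n) (hq : P (i + p) = P i + q) :
    ∃ i' n', IsRun u i' q n' ∧ i' ≤ P i ∧ P (i + n) < i' + n' ∧
      prefixSum (weight Λ) u (i' + q) - prefixSum (weight Λ) u i' =
        Λ * (prefixSum (weight Λ) u (i + p) - prefixSum (weight Λ) u i) ∧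
      runPotential Λ u i' q n' = Λ * runPotential Λ u i p n := by
  have hqpos : 0 < q := by
    have := B.strictMono (Nat.lt_add_of_pos_right (n := i) hR.period_pos); omega
  obtain ⟨i', e, hi, hmatch, hleft, hpotl⟩ := B.exists_left_extension h hR.left_ne hq
  obtain ⟨e', he', hmatch', hright, hpotr⟩ := B.exists_right_extension h hR.right_ne
  obtain ⟨hlen, himage⟩ := B.image_eq_of_forall_apply_eq hR.repetition
  have hin := B.start_add_two_mul_le i n
  obtain ⟨n', hn'⟩ := Nat.exists_eq_add_of_le (show i' ≤ P (i + n) + e' by omega)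
  have hn'q : P (i + p + n) + e' = i' + q + n' := by omega
  rw [hn', hn'q] at hright hpotr
  refine ⟨i', n', ⟨hqpos, fun t ht => ?_, hright, hleft⟩, by omega, by omega, ?_, ?_⟩
  · rcases Nat.lt_or_ge t e with hte | hte
    · exact hmatch t hte
    rcases Nat.lt_or_ge (i' + t) (P (i + n)) with htn | htn
    · have := himage (t - e) (by omega)
      rwa [show P i + (t - e) = i' + t by omega,
        show P (i + p) + (t - e) = i' + q + t by omega] at this
    · have := hmatch' (i' + t - P (i + n)) (by omega)
      rwa [show P (i + n) + (i' + t - P (i + n)) = i' + t by omega,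
        show P (i + p + n) + (i' + t - P (i + n)) = i' + q + t by omega] at this
  · have hshift := prefixSum_add_sub_congr (f := weight Λ) hmatch
    rw [← hi, show i' + q + e = P (i + p) by omega] at hshift
    linear_combination B.prefixSum_weight_start h (i + p) - B.prefixSum_weight_start h i + hshift
  · have hconst : Λ * (1 / (Λ - 1)) = 1 + 1 / (Λ - 1) := by
      have : Λ - 1 ≠ 0 := by linarith [h.two_lt]
      field_simp
      ring
    unfold runPotential
    linear_combination hpotr + hpotl - B.prefixSum_weight_start h i - hconst

/- A run containing the letter `0` is the image of a run of the same kind: the position of a `0` and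
of its copy one period later are starts of blocks, say of `a` and `b`, and the image of the run of
period `b - a` through `a` meets the given run. -/
theorem exists_preimage_run (B : PhiBlocks D u P) (h : IsPerronRoot D Λ) {i p n t : ℕ}
    (hR : IsRun u i p n) (ht : t < n) (hzero : u (i + t) = 0) :
    ∃ i₀ p₀ n₀, IsRun u i₀ p₀ n₀ ∧ n₀ < n ∧
      prefixSum (weight Λ) u (i + p) - prefixSum (weight Λ) u i =
        Λ * (prefixSum (weight Λ) u (i₀ + p₀) - prefixSum (weight Λ) u i₀) ∧
      runPotential Λ u i p n = Λ * runPotential Λ u i₀ p₀ n₀ := by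
  obtain ⟨a, ha⟩ := B.exists_eq_start hzero
  obtain ⟨b, hb⟩ := B.exists_eq_start ((hR.repetition t ht).symm.trans hzero)
  have hp := hR.period_pos
  obtain ⟨p₀, rfl⟩ := Nat.exists_eq_add_of_le (B.strictMono.lt_iff_lt.mp
    (show P a < P b by omega)).le
  have hp₀ : 0 < p₀ := Nat.pos_of_ne_zero fun h₀ => by subst h₀; rw [add_zero] at hb; omega
  obtain ⟨i₀, n₀, hR₀, hi₀, hn₀⟩ := IsRepetition.exists_isRun (i := a) (n := 0)
    (fun _ hk => absurd hk (Nat.not_lt_zero _)) hp₀ (B.not_eventually_periodic hp₀)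
  obtain ⟨k, rfl⟩ := Nat.exists_eq_add_of_le hi₀
  have hlen := (B.image_eq_of_forall_apply_eq (n := k)
    fun s hs => hR₀.repetition s (by omega)).1
  have hk := B.start_add_two_mul_le i₀ k
  have hnk := B.strictMono.monotone (show i₀ + k ≤ i₀ + n₀ by omega)
  have hn := B.start_add_two_mul_le i₀ n₀
  rw [add_right_comm i₀ k] at hb
  obtain ⟨i', n', hR', hi', hn', hweight, hpot⟩ :=
    B.exists_image_run h hR₀ (q := p) (by omega)
  obtain ⟨rfl, rfl⟩ := hR.eq_of_mem hR' (z := i + t) (by omega) (by omega) (by omega) (by omega)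
  exact ⟨i₀, p₀, n₀, hR₀, by omega, hweight, hpot⟩

end PhiBlocks

/-! ### Weights of repetitions -/

theorem prefixSum_weight_monotone {Λ : ℝ} (hΛ : 2 < Λ) (u : ℕ → ℕ) :
    Monotone (prefixSum (weight Λ) u) :=
  prefixSum_monotone fun m => zero_le_one.trans (one_le_weight hΛ (u m))

theorem weight_le_prefixSum_sub {Λ : ℝ} (hΛ : 2 < Λ) (u : ℕ → ℕ) {a b x : ℕ} (ha : a ≤ x)
    (hb : x < b) : weight Λ (u x) ≤ prefixSum (weight Λ) u b - prefixSum (weight Λ) u a := by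
  have hmono := prefixSum_weight_monotone hΛ u
  have := prefixSum_succ (f := weight Λ) (u := u) x
  have := hmono ha
  have := hmono (Nat.succ_le_of_lt hb)
  linarith

theorem runPotential_zero_le_of_mem {Λ : ℝ} (hΛ : 2 < Λ) (hΛ' : Λ < 3)
    {u : ℕ → ℕ} {i p k y : ℕ} (hy : i ≤ y) (hy' : y < i + p) (hk : k ≤ u y)
    (hpot : leftPotential Λ u i p + mismatchPotential Λ (u i) (u (i + p)) ≤
      mismatchCoeff Λ * (1 + Λ ^ k)) :
    runPotential Λ u i p 0 ≤
      (prefixSum (weight Λ) u (i + p) - prefixSum (weight Λ) u i) / (3 - Λ) := by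
  calc runPotential Λ u i p 0
      = 1 / (Λ - 1) + (leftPotential Λ u i p + mismatchPotential Λ (u i) (u (i + p))) := by
        simp only [runPotential, add_zero]
        ring
    _ ≤ weight Λ k / (3 - Λ) := by rw [weight_div hΛ hΛ']; gcongr
    _ ≤ _ := div_le_div_of_nonneg_right ((weight_monotone hΛ hk).trans
        (weight_le_prefixSum_sub hΛ u hy hy')) (sub_nonneg.mpr hΛ'.le)

theorem IsPerronRoot.runPotential_one_of_min_eq_zero {D : ℕ} {Λ : ℝ} (h : IsPerronRoot D Λ)
    {u : ℕ → ℕ} {x p : ℕ} (htop : u (x + 1) = D) (hleft : min (u x) (u (x + p)) = 0)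
    (hright : min (u (x + 1 + 1)) (u (x + 1 + p + 1)) = 0) :
    runPotential Λ u (x + 1) p 1 = weight Λ D / (3 - Λ) := by
  rw [runPotential, leftPotential_succ, prefixSum_succ, htop, mismatchPotential,
    mismatchPotential, hleft, hright, h.weight_top_div]
  ring

namespace PhiBlocks

variable {D : ℕ} {u P : ℕ → ℕ} {Λ : ℝ}

theorem runPotential_zero_le (B : PhiBlocks D u P) (h : IsPerronRoot D Λ) {i p : ℕ}
    (hR : IsRun u i p 0) :
    runPotential Λ u i p 0 ≤
      (prefixSum (weight Λ) u (i + p) - prefixSum (weight Λ) u i) / (3 - Λ) := by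
  have hp := hR.period_pos
  have hκ := mismatchCoeff_pos h.two_lt h.lt_three
  have hne := hR.right_ne
  simp only [add_zero] at hne
  by_cases hleft : leftPotential Λ u i p ≤ mismatchCoeff Λ
  · refine runPotential_zero_le_of_mem h.two_lt h.lt_three le_rfl (by omega)
      (min_le_left _ (u (i + p))) ?_
    rw [mul_one_add]
    exact add_le_add_left hleft _
  obtain ⟨x, rfl⟩ : ∃ x, i = x + 1 := Nat.exists_eq_succ_of_ne_zero fun hi =>
    hleft (by rw [hi, leftPotential_zero]; exact hκ.le)
  rw [leftPotential_succ] at hleft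
  have hmin : min (u x) (u (x + p)) ≠ 0 := fun h0 => hleft (by simp [mismatchPotential, h0])
  have hx := B.eq_zero_or_top_of_ne_zero (x := x) (by omega)
  have hxp := B.eq_zero_or_top_of_ne_zero (x := x + p) (by omega)
  rw [add_right_comm] at hne
  have hright : min (u (x + 1)) (u (x + p + 1)) = 0 := by omega
  refine runPotential_zero_le_of_mem h.two_lt h.lt_three (y := x + p) (by omega) (by omega)
    (min_le_right (u x) _) ?_
  rw [leftPotential_succ, add_right_comm, mismatchPotential, mismatchPotential, hright]
  exact le_of_eq (by ring)

theorem eq_one_of_forall_ne_zero (B : PhiBlocks D u P) {i p n : ℕ} (hR : IsRun u i p n)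
    (hn : 0 < n) (hzero : ∀ t < n, u (i + t) ≠ 0) :
    n = 1 ∧ u i = D ∧ ∃ x, i = x + 1 ∧ min (u x) (u (x + p)) = 0 ∧
      min (u (i + 1)) (u (i + p + 1)) = 0 := by
  have hD := B.one_le
  have hfirst := hzero 0 hn
  obtain ⟨x, rfl⟩ : ∃ x, i = x + 1 := Nat.exists_eq_succ_of_ne_zero fun hi => by
    subst hi
    exact hfirst B.apply_zero
  have hleft := hR.left_ne x rfl
  have hmatch := hR.repetition 0 hn
  have hright := hR.right_ne
  simp only [add_zero] at hfirst hmatch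
  rw [add_right_comm x 1 p] at hright hmatch ⊢
  have hx := B.eq_zero_or_top_of_ne_zero (x := x)
  have hxp := B.eq_zero_or_top_of_ne_zero (x := x + p)
  have hx₁ := B.eq_zero_or_top_of_ne_zero (x := x + 1)
  have hxp₁ := B.eq_zero_or_top_of_ne_zero (x := x + p + 1)
  simp only [add_assoc, Nat.reduceAdd] at hx hxp hx₁ hxp₁ hmatch hright ⊢
  obtain rfl : n = 1 := by
    by_contra hn₁
    have hmatch₁ := hR.repetition 1 (by omega)
    have hzero₁ := hzero 1 (by omega)
    rw [add_right_comm x 1 p] at hmatch₁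
    simp only [add_assoc, Nat.reduceAdd] at hmatch₁ hzero₁
    omega
  exact ⟨rfl, by omega, x, rfl, by omega, by omega⟩

theorem runPotential_le_of_forall_ne_zero (B : PhiBlocks D u P) (h : IsPerronRoot D Λ) {i p n : ℕ}
    (hR : IsRun u i p n) (hn : 0 < n) (hzero : ∀ t < n, u (i + t) ≠ 0) :
    runPotential Λ u i p n ≤
      (prefixSum (weight Λ) u (i + p) - prefixSum (weight Λ) u i) / (3 - Λ) := by
  obtain ⟨rfl, htop, x, rfl, hleft, hright⟩ := B.eq_one_of_forall_ne_zero hR hn hzero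
  rw [h.runPotential_one_of_min_eq_zero htop hleft hright, ← htop]
  exact div_le_div_of_nonneg_right (weight_le_prefixSum_sub h.two_lt u le_rfl
    (Nat.lt_add_of_pos_right hR.period_pos)) (by linarith [h.lt_three])

theorem runPotential_le (B : PhiBlocks D u P) (h : IsPerronRoot D Λ) {i p n : ℕ}
    (hR : IsRun u i p n) :
    runPotential Λ u i p n ≤
      (prefixSum (weight Λ) u (i + p) - prefixSum (weight Λ) u i) / (3 - Λ) := by
  induction n using Nat.strong_induction_on generalizing i p with
  | _ n ih =>
    rcases Nat.eq_zero_or_pos n with rfl | hn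
    · exact B.runPotential_zero_le h hR
    by_cases hzero : ∀ t < n, u (i + t) ≠ 0
    · exact B.runPotential_le_of_forall_ne_zero h hR hn hzero
    · push Not at hzero
      obtain ⟨t, ht, hzero⟩ := hzero
      obtain ⟨i₀, p₀, n₀, hR₀, hn₀, hweight, hpot⟩ := B.exists_preimage_run h hR ht hzero
      rw [hweight, hpot, mul_div_assoc]
      exact mul_le_mul_of_nonneg_left (ih n₀ hn₀ hR₀) (by linarith [h.two_lt])

theorem prefixSum_sub_le_of_isRepetition (B : PhiBlocks D u P) (h : IsPerronRoot D Λ) {i p n : ℕ}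
    (hp : 0 < p) (hrep : IsRepetition u i p n) :
    prefixSum (weight Λ) u (i + n) - prefixSum (weight Λ) u i ≤
      (prefixSum (weight Λ) u (i + p) - prefixSum (weight Λ) u i) / (3 - Λ) := by
  obtain ⟨i', n', hR, hi', hn'⟩ := hrep.exists_isRun hp (B.not_eventually_periodic hp)
  obtain ⟨k, rfl⟩ := Nat.exists_eq_add_of_le hi'
  have hmono := prefixSum_weight_monotone h.two_lt u
  have hperiod := prefixSum_add_sub_congr (f := weight Λ) (n := k)
    fun s hs => hR.repetition s (by omega)
  have hend := hmono hn'
  have hbegin := hmono hi'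
  calc prefixSum (weight Λ) u (i' + k + n) - prefixSum (weight Λ) u (i' + k)
      ≤ prefixSum (weight Λ) u (i' + n') - prefixSum (weight Λ) u i' := by linarith
    _ ≤ runPotential Λ u i' p n' := prefixSum_sub_le_runPotential h.two_lt h.lt_three u i' p n'
    _ ≤ (prefixSum (weight Λ) u (i' + p) - prefixSum (weight Λ) u i') / (3 - Λ) :=
        B.runPotential_le h hR
    _ = _ := by
        rw [add_right_comm i' k p]
        congr 1
        linarith

theorem exists_isRun_runPotential_eq (B : PhiBlocks D u P) (h : IsPerronRoot D Λ) (N : ℕ) :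
    ∃ i p n, IsRun u i p n ∧ N < p ∧
      runPotential Λ u i p n =
        (prefixSum (weight Λ) u (i + p) - prefixSum (weight Λ) u i) / (3 - Λ) := by
  induction N with
  | zero =>
    obtain ⟨x, hx⟩ := B.exists_apply_eq_top
    obtain ⟨hlt, -⟩ | ⟨-, hP, h₁, h₂⟩ := B.small_or_top x
    · exact absurd hx hlt.ne
    have hD := B.one_le
    have h₀ := B.apply_start x
    have h₃ := B.apply_start (x + 1)
    rw [hP] at h₃
    refine ⟨P x + 1, 1, 1, ⟨one_pos, fun t ht => ?_, ?_, fun k hk => ?_⟩, one_pos, ?_⟩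
    · obtain rfl : t = 0 := by omega
      exact h₁.trans h₂.symm
    · change u (P x + 2) ≠ u (P x + 3)
      omega
    · obtain rfl : k = P x := by omega
      omega
    · rw [h.runPotential_one_of_min_eq_zero h₁ (by simp [h₀]) (by simp [add_assoc, h₃]),
        prefixSum_succ, h₁, add_sub_cancel_left]
  | succ N ih =>
    obtain ⟨i, p, n, hR, hp, heq⟩ := ih
    have hP := B.start_add_two_mul_le i p
    obtain ⟨q, hq⟩ := Nat.exists_eq_add_of_le (show P i ≤ P (i + p) by omega)
    obtain ⟨i', n', hR', -, -, hweight, hpot⟩ := B.exists_image_run h hR hq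
    exact ⟨i', q, n', hR', by omega, by rw [hpot, heq, hweight, mul_div_assoc]⟩

end PhiBlocks

/-! ### Lengths and weights -/

/-- The prefix sums of `f` along `u` are nondecreasing up to a bounded error. -/
def HasBoundedDrop (u : ℕ → ℕ) (f : ℕ → ℝ) : Prop :=
  ∃ C, ∀ i j, i ≤ j → prefixSum f u i ≤ prefixSum f u j + C

namespace PhiBlocks

variable {D : ℕ} {u P : ℕ → ℕ} {Λ : ℝ}

theorem exists_abs_prefixSum_sub_start_le (B : PhiBlocks D u P) (f : ℕ → ℝ) :
    ∃ C, ∀ m x, P m ≤ x → x < P (m + 1) → |prefixSum f u x - prefixSum f u (P m)| ≤ C := by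
  refine ⟨|f 0| + ∑ a ∈ Finset.range (D + 1), |f a|, fun m x hx hx' => ?_⟩
  have hletter : |f (u (P m + 1))| ≤ ∑ a ∈ Finset.range (D + 1), |f a| :=
    Finset.single_le_sum (f := fun a => |f a|) (fun _ _ => abs_nonneg _)
      (Finset.mem_range_succ_iff.mpr (B.apply_le _))
  obtain ⟨t, rfl⟩ := Nat.exists_eq_add_of_le hx
  have ht : t ≤ 2 := by have := B.start_succ_le m; omega
  interval_cases t
  · simp only [add_zero, sub_self, abs_zero]
    exact add_nonneg (abs_nonneg _) ((abs_nonneg _).trans hletter)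
  · rw [prefixSum_succ, B.apply_start, add_sub_cancel_left]
    linarith [abs_nonneg (f (u (P m + 1)))]
  · rw [← add_assoc (P m) 1 1, prefixSum_succ, prefixSum_succ, B.apply_start, add_assoc,
      add_sub_cancel_left]
    exact (abs_add_le _ _).trans (add_le_add_right hletter _)

theorem hasBoundedDrop_of_renormalize (B : PhiBlocks D u P) (hΛ : 0 < Λ) {f : ℕ → ℝ}
    (hf : HasBoundedDrop u (renormalize D Λ f)) : HasBoundedDrop u f := by
  obtain ⟨C, hC⟩ := hf
  obtain ⟨K, hK⟩ := B.exists_abs_prefixSum_sub_start_le f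
  refine ⟨Λ * C + 2 * K, fun i j hij => ?_⟩
  obtain ⟨a, hai, hia⟩ := B.exists_block i
  obtain ⟨b, hbj, hjb⟩ := B.exists_block j
  have hab : a ≤ b := Nat.lt_succ_iff.mp (B.strictMono.lt_iff_lt.mp (show P a < P (b + 1) by omega))
  have hstart := mul_le_mul_of_nonneg_left (hC a b hab) hΛ.le
  rw [mul_add, ← B.prefixSum_start hΛ.ne', ← B.prefixSum_start hΛ.ne'] at hstart
  have hi := abs_le.mp (hK a i hai hia)
  have hj := abs_le.mp (hK b j hbj hjb)
  linarith

theorem hasBoundedDrop_of_iterate_renormalize_nonneg (B : PhiBlocks D u P) (hΛ : 0 < Λ) {n : ℕ}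
    {f : ℕ → ℝ} (hf : ∀ x ≤ D, 0 ≤ (renormalize D Λ)^[n] f x) : HasBoundedDrop u f := by
  induction n generalizing f with
  | zero =>
    refine ⟨0, fun i j hij => ?_⟩
    rw [add_zero]
    exact prefixSum_monotone (fun m => hf (u m) (B.apply_le m)) hij
  | succ n ih => exact B.hasBoundedDrop_of_renormalize hΛ (ih hf)

end PhiBlocks

namespace IsPerronRoot

variable {D : ℕ} {Λ : ℝ}

theorem iterate_renormalize_add_weight (h : IsPerronRoot D Λ) (f : ℕ → ℝ) (a b : ℝ) (n : ℕ) {x : ℕ}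
    (hx : x ≤ D) :
    (renormalize D Λ)^[n] (fun y => a * f y + b * weight Λ y) x =
      a * (renormalize D Λ)^[n] f x + b * weight Λ x := by
  induction n generalizing x with
  | zero => rfl
  | succ n ih =>
    rw [Function.iterate_succ_apply', Function.iterate_succ_apply', ← h.renormalize_weight hx]
    simp only [renormalize, ih D.zero_le, ih le_rfl]
    split_ifs with hlt
    · rw [ih hlt]
      ring
    · ring

theorem renormalize_mem_Icc (h : IsPerronRoot D Λ) {f : ℕ → ℝ} {s r : ℝ}
    (hf : ∀ x ≤ D, f x ∈ Set.Icc (s * weight Λ x) (r * weight Λ x)) {x : ℕ} (hx : x ≤ D) :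
    renormalize D Λ f x ∈ Set.Icc ((s + (1 - 2 / Λ) * (f 0 - s)) * weight Λ x)
      ((r - (1 - 2 / Λ) * (r - f 0)) * weight Λ x) := by
  have hΛ : 0 < Λ := by linarith [h.two_lt]
  obtain ⟨hs₀, hr₀⟩ := hf 0 D.zero_le
  rw [weight_zero h.two_lt, mul_one] at hs₀ hr₀
  have hweight : (Λ - 2) * weight Λ x ≤ 1 := by
    rw [← h.sub_two_mul_weight]
    exact mul_le_mul_of_nonneg_left (weight_monotone h.two_lt hx) (by linarith [h.two_lt])
  have htail : (if x < D then f (x + 1) else 2 * f D) ∈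
      Set.Icc (s * (Λ * weight Λ x - 1)) (r * (Λ * weight Λ x - 1)) := by
    split_ifs with hlt
    · rw [← weight_succ h.two_lt]
      exact hf (x + 1) hlt
    · obtain rfl : x = D := by omega
      obtain ⟨hs, hr⟩ := hf x le_rfl
      rw [show Λ * weight Λ x - 1 = 2 * weight Λ x by linarith [h.sub_two_mul_weight]]
      constructor <;> linarith
  have hscale : ∀ a b : ℝ, (a + (1 - 2 / Λ) * b) * weight Λ x * Λ =
      a * (Λ * weight Λ x) + b * ((Λ - 2) * weight Λ x) := fun a b => by
    field_simp
  rw [sub_eq_add_neg r, ← mul_neg, Set.mem_Icc, renormalize, le_div_iff₀ hΛ, div_le_iff₀ hΛ,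
    hscale, hscale]
  constructor
  · linarith [htail.1, mul_le_mul_of_nonneg_left hweight (sub_nonneg.mpr hs₀)]
  · linarith [htail.2, mul_le_mul_of_nonneg_left hweight (sub_nonneg.mpr hr₀)]

theorem exists_iterate_renormalize_mem_Icc (h : IsPerronRoot D Λ) {f : ℕ → ℝ} {s r : ℝ}
    (hf : ∀ x ≤ D, f x ∈ Set.Icc (s * weight Λ x) (r * weight Λ x)) (n : ℕ) :
    ∃ s' r', s ≤ s' ∧ r' - s' = (2 / Λ) ^ n * (r - s) ∧
      ∀ x ≤ D, (renormalize D Λ)^[n] f x ∈ Set.Icc (s' * weight Λ x) (r' * weight Λ x) := by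
  induction n with
  | zero => exact ⟨s, r, le_rfl, by simp, hf⟩
  | succ n ih =>
    obtain ⟨s', r', hs, hsr, hmem⟩ := ih
    refine ⟨s' + (1 - 2 / Λ) * ((renormalize D Λ)^[n] f 0 - s'),
      r' - (1 - 2 / Λ) * (r' - (renormalize D Λ)^[n] f 0), ?_, ?_, fun x hx => ?_⟩
    · have h₀ := (hmem 0 D.zero_le).1
      rw [weight_zero h.two_lt, mul_one] at h₀
      have hfactor : 2 / Λ ≤ 1 := div_le_one_of_le₀ h.two_lt.le (by linarith [h.two_lt])
      exact hs.trans (le_add_of_nonneg_right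
        (mul_nonneg (sub_nonneg.mpr hfactor) (sub_nonneg.mpr h₀)))
    · rw [pow_succ, mul_right_comm, ← hsr]
      ring
    · rw [Function.iterate_succ_apply']
      exact h.renormalize_mem_Icc hmem hx

end IsPerronRoot

theorem PhiBlocks.exists_hasBoundedDrop {D : ℕ} {u P : ℕ → ℕ} {Λ ε : ℝ} (B : PhiBlocks D u P)
    (h : IsPerronRoot D Λ) (hε : 0 < ε) :
    ∃ s r, 0 < s ∧ r ≤ (1 + ε) * s ∧
      HasBoundedDrop u (fun x => 1 - s * weight Λ x) ∧
      HasBoundedDrop u (fun x => r * weight Λ x - 1) := by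
  have hΛ := h.two_lt
  have hΛ₀ : 0 < Λ := by linarith
  obtain ⟨n, hn⟩ := exists_pow_lt_of_lt_one (mul_pos hε (sub_pos.mpr hΛ))
    ((div_lt_one hΛ₀).mpr hΛ)
  obtain ⟨s, r, hs, hsr, hmem⟩ := h.exists_iterate_renormalize_mem_Icc (f := fun _ => 1)
    (s := Λ - 2) (r := 1) (fun x hx => ⟨by
      rw [← h.sub_two_mul_weight]
      exact mul_le_mul_of_nonneg_left (weight_monotone hΛ hx) (by linarith),
      by rw [one_mul]; exact one_le_weight hΛ x⟩) n
  refine ⟨s, r, by linarith, ?_,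
    B.hasBoundedDrop_of_iterate_renormalize_nonneg hΛ₀ (n := n) fun x hx => ?_,
    B.hasBoundedDrop_of_iterate_renormalize_nonneg hΛ₀ (n := n) fun x hx => ?_⟩
  · nlinarith [pow_pos (div_pos two_pos hΛ₀) n]
  · have := h.iterate_renormalize_add_weight (fun _ => 1) 1 (-s) n hx
    simp only [one_mul, neg_mul, ← sub_eq_add_neg] at this
    rw [this]
    exact sub_nonneg.mpr (hmem x hx).1
  · have := h.iterate_renormalize_add_weight (fun _ => 1) (-1) r n hx
    simp only [neg_mul, one_mul, ← sub_eq_neg_add] at this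
    rw [this]
    exact sub_nonneg.mpr (hmem x hx).2

/-! ### The asymptotic critical exponent -/

theorem mismatchPotential_le {Λ : ℝ} (hΛ : 2 < Λ) (hΛ' : Λ < 3) {a D : ℕ} (ha : a ≤ D) (b : ℕ) :
    mismatchPotential Λ a b ≤ mismatchCoeff Λ * Λ ^ D :=
  mul_le_mul_of_nonneg_left
    (pow_le_pow_right₀ (by linarith) ((min_le_left a b).trans ha)) (mismatchCoeff_pos hΛ hΛ').le

namespace PhiBlocks

variable {D : ℕ} {u P : ℕ → ℕ} {Λ : ℝ}

theorem leftPotential_le (B : PhiBlocks D u P) (hΛ : 2 < Λ) (hΛ' : Λ < 3) (i p : ℕ) :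
    leftPotential Λ u i p ≤ mismatchCoeff Λ * Λ ^ D := by
  unfold leftPotential
  split_ifs
  · exact (mul_pos (mismatchCoeff_pos hΛ hΛ') (pow_pos (by linarith) D)).le
  · exact mismatchPotential_le hΛ hΛ' (B.apply_le _) _

theorem runPotential_le_prefixSum_sub (B : PhiBlocks D u P) (hΛ : 2 < Λ) (hΛ' : Λ < 3) (i p n : ℕ) :
    runPotential Λ u i p n ≤
      prefixSum (weight Λ) u (i + n) - prefixSum (weight Λ) u i +
        (1 / (Λ - 1) + 2 * (mismatchCoeff Λ * Λ ^ D)) := by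
  unfold runPotential
  linarith [B.leftPotential_le hΛ hΛ' i p,
    mismatchPotential_le hΛ hΛ' (B.apply_le (i + n)) (u (i + p + n))]

theorem exists_length_bounds {ε : ℝ} (B : PhiBlocks D u P) (h : IsPerronRoot D Λ) (hε : 0 < ε) :
    ∃ s C, 0 < s ∧ ∀ i k : ℕ,
      s * (prefixSum (weight Λ) u (i + k) - prefixSum (weight Λ) u i) ≤ k + C ∧
      k ≤ (1 + ε) * (s * (prefixSum (weight Λ) u (i + k) - prefixSum (weight Λ) u i)) + C := by
  obtain ⟨s, r, hs, hrs, ⟨C₁, hC₁⟩, ⟨C₂, hC₂⟩⟩ := B.exists_hasBoundedDrop h hε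
  have hlower : ∀ m, prefixSum (fun x => 1 - s * weight Λ x) u m =
      m - s * prefixSum (weight Λ) u m := fun m => by
    simp [prefixSum, Finset.mul_sum]
  have hupper : ∀ m, prefixSum (fun x => r * weight Λ x - 1) u m =
      r * prefixSum (weight Λ) u m - m := fun m => by
    simp [prefixSum, Finset.mul_sum]
  refine ⟨s, max C₁ C₂, hs, fun i k => ⟨?_, ?_⟩⟩
  · have := hC₁ i (i + k) (Nat.le_add_right i k)
    rw [hlower, hlower, Nat.cast_add] at this
    linarith [le_max_left C₁ C₂]
  · have := hC₂ i (i + k) (Nat.le_add_right i k)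
    rw [hupper, hupper, Nat.cast_add] at this
    have hmono := prefixSum_weight_monotone h.two_lt u (Nat.le_add_right i k)
    linarith [le_max_right C₁ C₂, mul_le_mul_of_nonneg_right hrs (sub_nonneg.mpr hmono)]

theorem exists_length_le {c : ℝ} (B : PhiBlocks D u P) (h : IsPerronRoot D Λ)
    (hc : 1 / (3 - Λ) < c) :
    ∃ C, ∀ i p n, 0 < p → IsRepetition u i p n → (n : ℝ) ≤ c * p + C := by
  have hΛ : 0 < 3 - Λ := sub_pos.mpr h.lt_three
  have hcpos : 0 < c := (one_div_pos.mpr hΛ).trans hc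
  rw [div_lt_iff₀ hΛ, ← sub_pos] at hc
  obtain ⟨s, C, hs, hlength⟩ := B.exists_length_bounds h hc
  rw [add_sub_cancel] at hlength
  refine ⟨c * C + C, fun i p n hp hrep => ?_⟩
  have hweight := B.prefixSum_sub_le_of_isRepetition h hp hrep
  rw [le_div_iff₀ hΛ] at hweight
  have hperiod := mul_le_mul_of_nonneg_left (hlength i p).1 hcpos.le
  have hscaled := mul_le_mul_of_nonneg_left hweight (mul_pos hcpos hs).le
  linarith [(hlength i n).2]

theorem exists_le_length {c : ℝ} (B : PhiBlocks D u P) (h : IsPerronRoot D Λ)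
    (hc : c < 1 / (3 - Λ)) :
    ∃ C, ∀ N, ∃ i p n, N < p ∧ IsRepetition u i p n ∧ c * p ≤ n + C := by
  have hΛ : 0 < 3 - Λ := sub_pos.mpr h.lt_three
  rcases le_or_gt c 0 with hc₀ | hc₀
  · exact ⟨0, fun N => ⟨0, N + 1, 0, N.lt_succ_self, fun t ht => absurd ht t.not_lt_zero,
      by simpa using mul_nonpos_of_nonpos_of_nonneg hc₀ (Nat.cast_nonneg (N + 1))⟩⟩
  have hε : 0 < 1 / (c * (3 - Λ)) - 1 := by
    rw [sub_pos, lt_div_iff₀ (mul_pos hc₀ hΛ), one_mul]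
    exact (lt_div_iff₀ hΛ).mp hc
  obtain ⟨s, C, hs, hlength⟩ := B.exists_length_bounds h hε
  rw [add_sub_cancel] at hlength
  refine ⟨s * (1 / (Λ - 1) + 2 * (mismatchCoeff Λ * Λ ^ D)) + C + c * C, fun N => ?_⟩
  obtain ⟨i, p, n, hR, hNp, hpot⟩ := B.exists_isRun_runPotential_eq h N
  refine ⟨i, p, n, hNp, hR.repetition, ?_⟩
  have hperiod := mul_le_mul_of_nonneg_left (hlength i p).2 hc₀.le
  have hscaled := mul_le_mul_of_nonneg_left
    (B.runPotential_le_prefixSum_sub h.two_lt h.lt_three i p n) hs.le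
  have hcancel : ∀ x, c * (1 / (c * (3 - Λ)) * (s * x)) = s * (x / (3 - Λ)) := fun x => by
    field_simp
  rw [mul_add, hcancel, ← hpot] at hperiod
  linarith [(hlength i n).1]

end PhiBlocks

theorem statement2_general {d : ℕ} {u : ℕ → ℕ} (hu : IsPhiFixed d u) {Λ : ℝ} (hΛ1 : 2 < Λ)
    (hΛ2 : Λ < 3) (hΛ : Λ ^ (d - 1) * (Λ - 2) ^ 2 = 1) :
    acritExp u = ((1 + 1 / (3 - Λ) : ℝ) : EReal) := by
  have hd : 2 ≤ d := by
    by_contra! hd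
    rw [show d - 1 = 0 by omega] at hΛ
    nlinarith
  obtain ⟨D, rfl⟩ := Nat.exists_eq_add_of_le' (show 1 ≤ d by omega)
  have h : IsPerronRoot D Λ := ⟨hΛ1, hΛ2, hΛ⟩
  have B := hu.phiBlocks (by omega)
  exact le_antisymm
    (acritExp_le_one_add (one_div_nonneg.mpr (sub_nonneg.mpr hΛ2.le)) fun _ => B.exists_length_le h)
    (one_add_le_acritExp fun _ => B.exists_le_length h)

/-- For `d ≥ 3`, the asymptotic critical exponent of the fixed point `u_d`
of `φ_d` equals `1 + 1/(3 - Λ_d)`, where `Λ_d` is the unique real in `(2,3)` with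
`Λ_d^(d-1)·(Λ_d-2)^2 = 1` (the spectral radius of the incidence matrix of `φ_d`). -/
theorem statement2 (d : ℕ) (hd : 3 ≤ d) (u : ℕ → ℕ) (hu : IsPhiFixed d u)
    (Λ : ℝ) (hΛ1 : 2 < Λ) (hΛ2 : Λ < 3) (hΛ : Λ ^ (d - 1) * (Λ - 2) ^ 2 = 1) :
    acritExp u = ((1 + 1 / (3 - Λ) : ℝ) : EReal) :=
  statement2_general hu hΛ1 hΛ2 hΛ

end RichRT
end

section
/- For every integer d ≥ 3, the binary sequence π(u_d), the image of the fixed point u_d of φ_d under the projection π : i ↦ a b^i, is rich: every factor of π(u_d) of length n contains exactly n+1 distinct palindromic factors (including the empty word). -/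
namespace RichRT

variable {A : Type*}

/-- The projection `π : i ↦ a bⁱ` to the binary alphabet (here `a = false`, `b = true`). -/
def piL (i : ℕ) : List Bool := false :: List.replicate i true

/-!
A word is rich as soon as every return to a palindrome in it is a palindrome: the longest
palindromic suffix of each prefix then occurs there for the first time, so each letter contributes
a new palindrome.

Palindromic returns are transported along the morphisms `i ↦ m B(i)`, where the marker `m` occurs in
no block and each block is a power of one letter. A palindrome of the image containing `m` is
`α x α~`, where `x` is the image, with a closing marker, of a palindrome `y` of the source, and the
occurrences of `α x α~` are those of `y` framed by letters `i` such that `α` is a suffix of `B(i)`.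
For both `φ_d` and `π` this set of letters is empty, a singleton or an upper set, unless `α` is
empty. Singletons are covered by the palindromes `c y c`. Returns to palindromes framed by letters
of an upper set do not reduce to returns to palindromes, so they are added to the invariant: the
letters `≥ k + 1` of `φ_d(w)` come from letters `≥ k` of `w`, and two adjacent nonzero letters are
both `d - 1`. Hence `φ_d` preserves the invariant, which passes to all prefixes of `u_d`, and `π`
turns it into palindromic returns.
-/

section PalindromicReturns

variable {w : List A} {K : Set A}

/-- Every return to a palindrome inside `w` is palindromic, in a form that does not mention
consecutive occurrences: a factor `z` of `w` having a palindrome `p` as a proper prefix and a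
proper suffix has a palindromic suffix longer than `p`. -/
def PalReturns (w : List A) : Prop :=
  ∀ ⦃z p : List A⦄, z <:+: w → p.Palindrome → p <+: z → p <:+ z → p ≠ z →
    ∃ q : List A, q.Palindrome ∧ q <:+ z ∧ p <:+ q ∧ p ≠ q

/-- The variant of `PalReturns` for returns to the set of letters `K`: between a letter of `K` and
a later one, some letter of `K` is followed by a palindrome reaching up to the latter. -/
def LetterPalReturns (K : Set A) (w : List A) : Prop :=
  ∀ ⦃i : A⦄ ⦃z : List A⦄ ⦃j : A⦄, i :: (z ++ [j]) <:+: w → i ∈ K → j ∈ K →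
    ∃ i' ∈ K, ∃ q : List A, q.Palindrome ∧ i' :: q <:+ i :: z

/-- The variant of `PalReturns` for occurrences of palindromes `y` framed by letters of `K`, which
need not be the same on both sides nor at both occurrences. -/
def FramedPalReturns (K : Set A) (w : List A) : Prop :=
  ∀ ⦃i : A⦄ ⦃z : List A⦄ ⦃j : A⦄, i :: (z ++ [j]) <:+: w → i ∈ K → j ∈ K →
    ∀ ⦃i' : A⦄ ⦃y : List A⦄ ⦃j' : A⦄, y.Palindrome → i' ∈ K → j' ∈ K →
      y ++ [j'] <+: z → i' :: y <:+ z →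
        ∃ i'' ∈ K, ∃ q : List A, q.Palindrome ∧ i'' :: q <:+ i :: z ∧ y <:+ q ∧ y ≠ q

theorem PalReturns.of_infix {w' : List A} (hw : PalReturns w) (h : w' <:+: w) : PalReturns w' :=
  fun _ _ hz => hw (hz.trans h)

theorem LetterPalReturns.of_infix {w' : List A} (hw : LetterPalReturns K w) (h : w' <:+: w) :
    LetterPalReturns K w' :=
  fun _ _ _ hz => hw (hz.trans h)

theorem FramedPalReturns.of_infix {w' : List A} (hw : FramedPalReturns K w) (h : w' <:+: w) :
    FramedPalReturns K w' :=
  fun _ _ _ hz => hw (hz.trans h)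

theorem letterPalReturns_empty : LetterPalReturns ∅ w :=
  fun _ _ _ _ hi => hi.elim

theorem framedPalReturns_empty : FramedPalReturns ∅ w :=
  fun _ _ _ _ hi => hi.elim

theorem exists_cons_suffix_cons_of_suffix {x z : List A} (h : x <:+ z) (i : A) :
    ∃ a, a :: x <:+ i :: z := by
  obtain ⟨l, rfl⟩ := h
  obtain ⟨l', a, hl⟩ := List.eq_nil_or_concat' (i :: l) |>.resolve_left (by simp)
  exact ⟨a, l', by rw [← List.cons_append, hl]; simp⟩

theorem letterPalReturns_univ : LetterPalReturns Set.univ w := by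
  intro i z j _ _ _
  obtain ⟨a, ha⟩ := exists_cons_suffix_cons_of_suffix (List.nil_suffix (l := z)) i
  exact ⟨a, trivial, [], .nil, ha⟩

theorem PalReturns.framedPalReturns_univ (hw : PalReturns w) : FramedPalReturns Set.univ w := by
  intro i z j hz _ _ i' y j' hy _ _ hpre hsuf
  have hyz : y ≠ z := by
    rintro rfl
    simpa using hpre.length_le
  obtain ⟨q, hq, hqz, hyq, hne⟩ := hw ((List.infix_append' [i] z [j]).trans hz) hy
    ((List.prefix_append y [j']).trans hpre) ((List.suffix_cons i' y).trans hsuf) hyz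
  obtain ⟨a, ha⟩ := exists_cons_suffix_cons_of_suffix hqz i
  exact ⟨a, trivial, q, hq, ha, hyq, hne⟩

theorem palindrome_of_palindrome_cons_concat {c : A} {y : List A}
    (h : (c :: (y ++ [c])).Palindrome) : y.Palindrome := by
  refine .of_reverse_eq ?_
  simpa using h.reverse_eq

theorem eq_cons_concat_of_palindrome {c : A} {y q : List A} (hq : q.Palindrome)
    (hsuf : y ++ [c] <:+ q) (hne : y ++ [c] ≠ q) :
    ∃ q', q = c :: (q' ++ [c]) ∧ q'.Palindrome ∧ y <:+ q' := by
  obtain ⟨l, rfl⟩ := hsuf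
  cases l with
  | nil => exact absurd rfl hne
  | cons a l =>
    obtain rfl : c = a := by simpa using congrArg List.head? hq.reverse_eq
    refine ⟨l ++ y, by simp, palindrome_of_palindrome_cons_concat (c := c) ?_, ⟨l, rfl⟩⟩
    simpa using hq

theorem PalReturns.letterPalReturns_singleton (hw : PalReturns w) (c : A) :
    LetterPalReturns {c} w := by
  rintro i z j hz rfl rfl
  obtain ⟨q, hq, hqz, hsuf, hne⟩ :=
    hw hz (.singleton j) (List.prefix_append [j] _) ⟨j :: z, rfl⟩ (by simp)
  obtain ⟨q', rfl, hq', -⟩ := eq_cons_concat_of_palindrome (y := []) hq hsuf hne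
  exact ⟨j, rfl, q', hq', List.suffix_append_self_iff.1 hqz⟩

theorem PalReturns.framedPalReturns_singleton (hw : PalReturns w) (c : A) :
    FramedPalReturns {c} w := by
  rintro i z j hz rfl rfl i' y j' hy rfl rfl hpre hsuf
  have hne : j' :: (y ++ [j']) ≠ j' :: (z ++ [j']) := by
    intro h
    obtain rfl : y = z := by simpa using h
    simpa using hpre.length_le
  obtain ⟨q, hq, hqz, hsuf', hne'⟩ := hw hz (.cons_concat j' hy)
    (List.cons_prefix_cons.2 ⟨rfl, hpre.trans (List.prefix_append z [j'])⟩)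
    ((List.suffix_append_self_iff.2 hsuf).trans (List.suffix_cons j' _)) hne
  obtain ⟨q', rfl, hq', hyq⟩ := eq_cons_concat_of_palindrome (y := j' :: y) hq hsuf' hne'
  refine ⟨j', rfl, q', hq', List.suffix_append_self_iff.1 hqz,
    (List.suffix_cons j' y).trans hyq, ?_⟩
  rintro rfl
  simpa using hyq.length_le

end PalindromicReturns

section Richness

variable {w : List A}

theorem palindrome_prefix_of_suffix {p q : List A} (hp : p.Palindrome) (hq : q.Palindrome)
    (h : p <:+ q) : p <+: q := by
  rwa [← List.reverse_prefix, hp.reverse_eq, hq.reverse_eq] at h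

theorem exists_longest_palindrome_suffix (w : List A) :
    ∃ q : List A, q.Palindrome ∧ q <:+ w ∧ ∀ p : List A, p.Palindrome → p <:+ w → p <:+ q := by
  induction w with
  | nil => exact ⟨[], .nil, List.suffix_rfl, fun _ _ h => h⟩
  | cons a w ih =>
    by_cases haw : (a :: w).Palindrome
    · exact ⟨a :: w, haw, List.suffix_rfl, fun _ _ h => h⟩
    obtain ⟨q, hq, hqw, hmax⟩ := ih
    refine ⟨q, hq, hqw.trans (List.suffix_cons a w), fun p hp h => ?_⟩
    rcases List.suffix_cons_iff.1 h with rfl | h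
    · exact absurd hp haw
    · exact hmax p hp h

theorem infix_of_proper_prefix_of_suffix_concat {p q : List A} {c : A} (hpq : p <+: q)
    (hne : p ≠ q) (hq : q <:+ w ++ [c]) : p <:+: w := by
  obtain ⟨r, rfl⟩ := hpq
  obtain ⟨r, a, rfl⟩ := (List.eq_nil_or_concat' r).resolve_left (by rintro rfl; simp at hne)
  obtain ⟨s, hs⟩ := hq
  exact ⟨s, r, (List.append_inj' (t₁ := [a]) (t₂ := [c]) (by simpa using hs) rfl).1⟩

/-- The set of palindromic factors of `w`, of which `palCount w` is the cardinality. -/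
def palFactors (w : List A) : Set (List A) := {p | p <:+: w ∧ p.reverse = p}

theorem finite_palFactors (w : List A) : (palFactors w).Finite :=
  w.sublists.finite_toSet.subset fun _ hp => List.mem_sublists.2 hp.1.sublist

theorem palFactors_concat {q : List A} {c : A} (hq : q.Palindrome) (hqw : q <:+ w ++ [c])
    (hmax : ∀ p : List A, p.Palindrome → p <:+ w ++ [c] → p <:+ q) :
    palFactors (w ++ [c]) = insert q (palFactors w) := by
  ext p
  constructor
  · rintro ⟨hp, hpal⟩
    rcases List.infix_concat_iff.1 hp with hsuf | hinf
    · have hpq := palindrome_prefix_of_suffix (.of_reverse_eq hpal) hq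
        (hmax p (.of_reverse_eq hpal) hsuf)
      exact (eq_or_ne p q).imp id fun hne =>
        ⟨infix_of_proper_prefix_of_suffix_concat hpq hne hqw, hpal⟩
    · exact Or.inr ⟨hinf, hpal⟩
  · rintro (rfl | ⟨hp, hpal⟩)
    · exact ⟨hqw.isInfix, hq.reverse_eq⟩
    · exact ⟨List.infix_concat_iff.2 (Or.inr hp), hpal⟩

theorem PalReturns.longest_palindrome_suffix_not_infix {q : List A} {c : A}
    (hw : PalReturns (w ++ [c])) (hq : q.Palindrome) (hqw : q <:+ w ++ [c])
    (hmax : ∀ p : List A, p.Palindrome → p <:+ w ++ [c] → p <:+ q) : ¬ q <:+: w := by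
  rintro ⟨s, t, rfl⟩
  have hz : q ++ (t ++ [c]) <:+ s ++ q ++ t ++ [c] := ⟨s, by simp⟩
  obtain ⟨q', hq', hsuf, hqq', hne⟩ := hw hz.isInfix hq (List.prefix_append q _)
    (List.suffix_of_suffix_length_le hqw hz (by simp)) (by simp)
  exact hne (hqq'.eq_of_length_le (hmax q' hq' (hsuf.trans hz)).length_le)

theorem PalReturns.richWord (hw : PalReturns w) : RichWord w := by
  change (palFactors w).ncard = w.length + 1
  induction w using List.reverseRecOn with
  | nil =>
    have hnil : palFactors ([] : List A) = {[]} := by ext; simp +contextual [palFactors]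
    simp [hnil]
  | append_singleton w c ih =>
    obtain ⟨q, hq, hqw, hmax⟩ := exists_longest_palindrome_suffix (w ++ [c])
    have hnew : q ∉ palFactors w := fun h =>
      hw.longest_palindrome_suffix_not_infix hq hqw hmax h.1
    rw [palFactors_concat hq hqw hmax, Set.ncard_insert_of_notMem hnew (finite_palFactors w),
      ih (hw.of_infix List.infix_append_left), List.length_append, List.length_singleton]

end Richness

section MarkedWords

variable {m : A}

theorem suffix_of_suffix_append_cons {α x y : List A} (hα : m ∉ α) (h : α <:+ x ++ m :: y) :
    α <:+ y := by
  rcases List.suffix_or_suffix_of_suffix h (List.suffix_append x (m :: y)) with h | h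
  · rcases List.suffix_cons_iff.1 h with rfl | h
    · simp at hα
    · exact h
  · exact absurd (h.subset List.mem_cons_self) hα

theorem prefix_of_prefix_append_cons {α x y : List A} (hα : m ∉ α) (h : α <+: x ++ m :: y) :
    α <+: x := by
  rw [← List.reverse_suffix] at h ⊢
  exact suffix_of_suffix_append_cons (m := m) (x := y.reverse) (by simpa using hα)
    (by simpa using h)

theorem infix_or_infix_of_infix_append_cons {α x y : List A} (hα : m ∉ α)
    (h : α <:+: x ++ m :: y) : α <:+: x ∨ α <:+: y := by
  rcases List.infix_append_iff.1 h with h | h | ⟨l₁, l₂, rfl, h₁, h₂⟩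
  · exact Or.inl h
  · rcases List.infix_cons_iff.1 h with h | h
    · exact Or.inl ((prefix_of_prefix_append_cons (x := []) hα h).trans List.nil_prefix).isInfix
    · exact Or.inr h
  · obtain rfl : l₂ = [] := (List.prefix_cons_iff.1 h₂).resolve_right (by
      rintro ⟨t, rfl, -⟩; simp at hα)
    exact Or.inl (by simpa using h₁.isInfix)

theorem palindrome_decomposition_of_mem {p : List A} (hp : p.Palindrome) (hm : m ∈ p) :
    ∃ α x, p = α ++ x ++ α.reverse ∧ m ∉ α ∧ x.Palindrome ∧ [m] <+: x := by
  induction hp with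
  | nil => simp at hm
  | singleton c =>
    obtain rfl := List.mem_singleton.1 hm
    exact ⟨[], [m], rfl, by simp, .singleton m, List.prefix_rfl⟩
  | @cons_concat c l hl ih =>
    by_cases hc : m = c
    · subst hc
      exact ⟨[], m :: (l ++ [m]), by simp, by simp, .cons_concat m hl, List.prefix_append [m] _⟩
    · obtain ⟨α, x, rfl, hα, hx, hmx⟩ := ih (by simpa [hc] using hm)
      exact ⟨c :: α, x, by simp, by simp [hc, hα], hx, hmx⟩

theorem singleton_suffix_of_palindrome {x : List A} (hx : x.Palindrome) (h : [m] <+: x) :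
    [m] <:+ x := by
  rwa [← List.reverse_prefix, hx.reverse_eq]

theorem exists_middle_of_prefix_of_suffix {α x β z : List A} (hpre : α ++ x ++ β <+: z)
    (hsuf : α ++ x ++ β <:+ z) : ∃ y, z = α ++ y ++ β ∧ x <+: y ∧ x <:+ y := by
  obtain ⟨r, rfl⟩ := hpre
  have hβ : β <:+ x ++ β ++ r := by
    refine List.suffix_of_suffix_length_le (l₃ := α ++ x ++ β ++ r)
      ((List.suffix_append _ _).trans hsuf) ⟨α, by simp⟩ ?_
    simp only [List.length_append]
    omega
  obtain ⟨y, hy⟩ := hβ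
  have hz : α ++ x ++ β ++ r = α ++ y ++ β := by simpa using hy.symm
  have hlen : x.length ≤ y.length := by
    have := congrArg List.length hy
    simp only [List.length_append] at this
    omega
  refine ⟨y, hz, ?_, ?_⟩
  · refine List.prefix_of_prefix_length_le (l₃ := y ++ β) ⟨β ++ r, by simp [hy]⟩
      (List.prefix_append y β) hlen
  · rw [hz, List.suffix_append_self_iff] at hsuf
    exact List.suffix_of_suffix_length_le ((List.suffix_append α x).trans hsuf)
      (List.suffix_append α y) hlen

theorem palindrome_of_infix_replicate {p : List A} {n : ℕ} {c : A}
    (h : p <:+: List.replicate n c) : p.Palindrome := by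
  obtain ⟨k, -, rfl⟩ := List.sublist_replicate_iff.1 h.sublist
  exact .of_reverse_eq List.reverse_replicate

theorem suffix_of_infix_replicate {p : List A} {n : ℕ} {c : A}
    (h : p <:+: List.replicate n c) : p <:+ List.replicate n c := by
  obtain ⟨k, hk, rfl⟩ := List.sublist_replicate_iff.1 h.sublist
  exact ⟨List.replicate (n - k) c, by rw [List.replicate_append_replicate, Nat.sub_add_cancel hk]⟩

theorem replicate_suffix_replicate_iff {a n : ℕ} {b c : A} :
    List.replicate (a + 1) b <:+ List.replicate n c ↔ a + 1 ≤ n ∧ b = c := by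
  constructor
  · intro h
    exact ⟨by simpa using h.length_le, List.eq_of_mem_replicate (h.subset (by simp))⟩
  · rintro ⟨hle, rfl⟩
    exact ⟨List.replicate (n - (a + 1)) b, by
      rw [List.replicate_append_replicate, Nat.sub_add_cancel hle]⟩

end MarkedWords

section MarkerCodes

variable {ι : Type*} {m : A} {B : ι → List A}

/-- The letter-to-word map `i ↦ m B(i)` is a marker code: the marker `m` occurs in no block
`B(i)`, which makes decoding unique, and each block is a power of a single letter. -/
structure IsMarkerCode (m : A) (B : ι → List A) : Prop where
  injective : Function.Injective B
  marker_notMem : ∀ i, m ∉ B i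
  exists_eq_replicate : ∀ i, ∃ n c, B i = List.replicate n c

/-- The image of `w` under the morphism `i ↦ m B(i)`. -/
def encode (m : A) (B : ι → List A) (w : List ι) : List A := w.flatMap fun i => m :: B i

/-- The image of `w` under `i ↦ m B(i)`, closed by a final marker; unlike `encode`, it maps
palindromes to palindromes when the blocks are palindromes. -/
def closedEncode (m : A) (B : ι → List A) (w : List ι) : List A := encode m B w ++ [m]

theorem length_le_length_flatMap {f : ι → List A} (hf : ∀ i, f i ≠ []) (w : List ι) :
    w.length ≤ (w.flatMap f).length := by
  induction w with
  | nil => simp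
  | cons i w ih =>
    have := List.length_pos_of_ne_nil (hf i)
    simp only [List.flatMap_cons, List.length_append, List.length_cons]
    omega

theorem encode_cons (i : ι) (w : List ι) : encode m B (i :: w) = m :: (B i ++ encode m B w) := rfl

theorem encode_append (w w' : List ι) :
    encode m B (w ++ w') = encode m B w ++ encode m B w' :=
  List.flatMap_append

theorem closedEncode_cons (i : ι) (w : List ι) :
    closedEncode m B (i :: w) = m :: (B i ++ closedEncode m B w) := by
  simp [closedEncode, encode_cons]

theorem closedEncode_append (w w' : List ι) :
    closedEncode m B (w ++ w') = encode m B w ++ closedEncode m B w' := by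
  simp [closedEncode, encode_append]

theorem marker_prefix_closedEncode (w : List ι) : [m] <+: closedEncode m B w := by
  cases w with
  | nil => exact List.prefix_rfl
  | cons i w => exact closedEncode_cons (B := B) i w ▸ List.prefix_append [m] _

theorem marker_suffix_closedEncode (w : List ι) : [m] <:+ closedEncode m B w :=
  List.suffix_append _ _

theorem closedEncode_suffix_closedEncode {y w : List ι} (h : y <:+ w) :
    closedEncode m B y <:+ closedEncode m B w := by
  obtain ⟨x, rfl⟩ := h
  exact closedEncode_append (m := m) (B := B) x y ▸ List.suffix_append _ _

theorem length_lt_length_closedEncode (w : List ι) : w.length < (closedEncode m B w).length := by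
  rw [closedEncode, List.length_append, List.length_singleton, Nat.lt_succ_iff]
  exact length_le_length_flatMap (fun i => List.cons_ne_nil m (B i)) w

theorem exists_infix_block_of_infix {p : List A} {w : List ι} (hp : p ≠ []) (hmp : m ∉ p)
    (h : p <:+: closedEncode m B w) : ∃ i, p <:+: B i := by
  induction w with
  | nil =>
    obtain rfl | rfl := (List.infix_singleton_iff _ _).1 h
    · exact absurd rfl hp
    · simp at hmp
  | cons i w ih =>
    obtain ⟨x, hx⟩ := marker_prefix_closedEncode (m := m) (B := B) w
    rw [closedEncode_cons, ← hx, ← List.cons_append] at h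
    rcases infix_or_infix_of_infix_append_cons hmp h with h | h
    · exact ⟨i, (infix_or_infix_of_infix_append_cons (x := []) hmp h).resolve_left (by simpa)⟩
    · exact ih (hx ▸ h.trans (List.suffix_cons m x).isInfix)

theorem exists_concat_prefix_of_closedEncode_append_prefix {y w : List ι} {β γ : List A}
    (hmβ : m ∉ β)
    (h : closedEncode m B y ++ β <+: closedEncode m B w ++ γ) (hy : y <+: w) (hne : y ≠ w) :
    ∃ j, y ++ [j] <+: w ∧ β <+: B j := by
  obtain ⟨_ | ⟨j, w'⟩, rfl⟩ := hy
  · simp at hne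
  obtain ⟨x, hx⟩ := marker_prefix_closedEncode (m := m) (B := B) w'
  refine ⟨j, ⟨w', by simp⟩, prefix_of_prefix_append_cons (m := m) (y := x ++ γ) hmβ ?_⟩
  rw [closedEncode_append, closedEncode_cons, ← hx] at h
  simpa [closedEncode] using h

theorem append_closedEncode_suffix_of_cons_suffix {f : ι → List A} {i i' : ι} {q w : List ι}
    (h : i' :: q <:+ i :: w) (hf : f i' <:+ B i') :
    f i' ++ closedEncode m B q <:+ f i ++ closedEncode m B w := by
  rcases List.suffix_cons_iff.1 h with h | h
  · obtain ⟨rfl, rfl⟩ := List.cons.inj h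
    exact List.suffix_rfl
  · have hsuf : f i' ++ closedEncode m B q <:+ closedEncode m B (i' :: q) := by
      rw [closedEncode_cons]
      exact (List.suffix_append_self_iff.2 hf).trans (List.suffix_cons m _)
    exact (hsuf.trans (closedEncode_suffix_closedEncode h)).trans (List.suffix_append _ _)

namespace IsMarkerCode

variable (hB : IsMarkerCode m B) {i j : ι} {w y q : List ι} {α β : List A}
include hB

theorem closedEncode_injective : Function.Injective (closedEncode m B) := by
  have prefix_of_eq {i j : ι} {w w' : List ι}
      (h : B i ++ closedEncode m B w = B j ++ closedEncode m B w') : B i <+: B j := by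
    obtain ⟨x, hx⟩ := marker_prefix_closedEncode (m := m) (B := B) w'
    rw [← hx] at h
    exact prefix_of_prefix_append_cons (hB.marker_notMem i) (h ▸ List.prefix_append _ _)
  intro w
  induction w with
  | nil => intro w' h; cases w' <;> simp_all [closedEncode, encode]
  | cons i w ih =>
    rintro (_ | ⟨j, w'⟩) h
    · simp [closedEncode, encode] at h
    · simp only [closedEncode_cons, List.cons.injEq, true_and] at h
      obtain rfl : i = j := hB.injective <|
        (prefix_of_eq h).eq_of_length_le (prefix_of_eq h.symm).length_le
      rw [ih (List.append_cancel_left h)]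

theorem reverse_block (i : ι) : (B i).reverse = B i := by
  obtain ⟨n, c, h⟩ := hB.exists_eq_replicate i
  simp [h]

theorem reverse_closedEncode (w : List ι) :
    (closedEncode m B w).reverse = closedEncode m B w.reverse := by
  induction w with
  | nil => rfl
  | cons i w ih =>
    simp only [closedEncode_cons, List.reverse_cons, List.reverse_append, ih, hB.reverse_block]
    simp [closedEncode, encode]

theorem palindrome_closedEncode_iff : (closedEncode m B w).Palindrome ↔ w.Palindrome := by
  rw [List.Palindrome.iff_reverse_eq, List.Palindrome.iff_reverse_eq, hB.reverse_closedEncode,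
    hB.closedEncode_injective.eq_iff]

theorem exists_split_of_append_marker_cons {l r : List A}
    (h : l ++ m :: r = closedEncode m B w) :
    ∃ w₁ w₂, w = w₁ ++ w₂ ∧ l = encode m B w₁ ∧ m :: r = closedEncode m B w₂ := by
  induction w generalizing l with
  | nil =>
    cases l with
    | nil => exact ⟨[], [], rfl, rfl, h⟩
    | cons a l => simp [closedEncode, encode] at h
  | cons i w ih =>
    cases l with
    | nil => exact ⟨[], i :: w, rfl, rfl, h⟩
    | cons a l =>
      rw [closedEncode_cons, List.cons_append, List.cons.injEq] at h
      obtain ⟨rfl, h⟩ := h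
      rcases List.append_eq_append_iff.1 h with ⟨_ | ⟨b, s⟩, hs, hr⟩ | ⟨s, rfl, hs⟩
      · exact ⟨[i], w, rfl, by simp [encode, hs], hr⟩
      · obtain ⟨rfl, -⟩ := List.cons.inj hr
        exact absurd (hs ▸ by simp) (hB.marker_notMem i)
      · obtain ⟨w₁, w₂, rfl, rfl, h₂⟩ := ih hs.symm
        exact ⟨i :: w₁, w₂, rfl, rfl, h₂⟩

theorem exists_decode_of_append_eq {l z r : List A} (h : l ++ z ++ r = closedEncode m B w)
    (hpre : [m] <+: z) (hsuf : [m] <:+ z) :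
    ∃ w₁ w₀ w₂, w = w₁ ++ w₀ ++ w₂ ∧ l = encode m B w₁ ∧ z = closedEncode m B w₀ ∧
      m :: r = closedEncode m B w₂ := by
  obtain ⟨z', rfl⟩ := hpre
  obtain ⟨w₁, w', rfl, rfl, h'⟩ :=
    hB.exists_split_of_append_marker_cons (l := l) (r := z' ++ r) (by simpa using h)
  obtain ⟨z'', hz⟩ := hsuf
  obtain ⟨w₀, w₂, rfl, rfl, h₂⟩ :=
    hB.exists_split_of_append_marker_cons (l := z'') (r := r) (w := w') <| by
      rw [← h', ← List.singleton_append, ← List.append_assoc, hz]; simp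
  exact ⟨w₁, w₀, w₂, by simp, rfl, hz.symm, h₂⟩

theorem exists_decode_of_infix {z : List A} (h : z <:+: closedEncode m B w)
    (hpre : [m] <+: z) (hsuf : [m] <:+ z) : ∃ w₀, w₀ <:+: w ∧ z = closedEncode m B w₀ := by
  obtain ⟨l, r, h⟩ := h
  obtain ⟨w₁, w₀, w₂, rfl, -, hz, -⟩ := hB.exists_decode_of_append_eq h hpre hsuf
  exact ⟨w₀, ⟨w₁, w₂, rfl⟩, hz⟩

theorem prefix_of_closedEncode_prefix (h : closedEncode m B y <+: closedEncode m B w) :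
    y <+: w := by
  obtain ⟨r, h⟩ := h
  obtain ⟨w₁, w₀, w₂, rfl, h₁, hy, -⟩ := hB.exists_decode_of_append_eq (l := []) h
    (marker_prefix_closedEncode y) (marker_suffix_closedEncode y)
  obtain rfl : w₁ = [] := by cases w₁ <;> first | rfl | simp [encode_cons] at h₁
  exact hB.closedEncode_injective hy ▸ List.prefix_append w₀ w₂

theorem suffix_of_closedEncode_suffix (h : closedEncode m B y <:+ closedEncode m B w) :
    y <:+ w := by
  rw [← List.reverse_prefix, hB.reverse_closedEncode, hB.reverse_closedEncode] at h
  exact List.reverse_prefix.1 (hB.prefix_of_closedEncode_prefix h)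

theorem exists_decode_of_framed_infix {z : List A} (hα : α ≠ []) (hmα : m ∉ α) (hβ : β ≠ [])
    (hmβ : m ∉ β) (h : α ++ z ++ β <:+: closedEncode m B w) (hpre : [m] <+: z)
    (hsuf : [m] <:+ z) :
    ∃ i w₀ j, i :: (w₀ ++ [j]) <:+: w ∧ α <:+ B i ∧ z = closedEncode m B w₀ ∧ β <+: B j := by
  obtain ⟨l, r, h⟩ := h
  obtain ⟨w₁, w₀, w₂, rfl, hl, hz, hr⟩ :=
    hB.exists_decode_of_append_eq (l := l ++ α) (r := β ++ r) (by simpa using h) hpre hsuf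
  obtain ⟨w₁, i, rfl⟩ := (List.eq_nil_or_concat' w₁).resolve_left <| by
    rintro rfl; simp [encode, hα] at hl
  obtain _ | ⟨j, w₂⟩ := w₂
  · simp [closedEncode, encode, hβ] at hr
  refine ⟨i, w₀, j, ⟨w₁, w₂, by simp⟩, ?_, hz, ?_⟩
  · refine suffix_of_suffix_append_cons (x := encode m B w₁) hmα ⟨l, ?_⟩
    simpa [encode] using hl
  · obtain ⟨x, hx⟩ := marker_prefix_closedEncode (m := m) (B := B) w₂
    simp only [closedEncode_cons, List.cons.injEq, true_and, ← hx] at hr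
    exact prefix_of_prefix_append_cons hmβ ⟨r, hr⟩

theorem exists_cons_suffix_of_append_closedEncode_suffix {γ : List A} (hmα : m ∉ α)
    (h : α ++ closedEncode m B y <:+ γ ++ closedEncode m B w) (hy : y <:+ w) (hne : y ≠ w) :
    ∃ i, i :: y <:+ w ∧ α <:+ B i := by
  rw [← List.reverse_prefix, List.reverse_append, List.reverse_append, hB.reverse_closedEncode,
    hB.reverse_closedEncode] at h
  obtain ⟨i, hi, hα⟩ := exists_concat_prefix_of_closedEncode_append_prefix
    (by simpa using hmα) h (List.reverse_prefix.2 hy) (by simpa using hne)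
  refine ⟨i, ?_, ?_⟩
  · simpa [← List.reverse_prefix] using hi
  · rwa [← List.reverse_prefix, hB.reverse_block]

/-- Since blocks are powers of a letter, an occurrence of `α` inside a block may be moved to the end
of that block, right before the next marker. -/
theorem exists_decode_of_infix_append_marker {x : List A} (hα : α ≠ []) (hmα : m ∉ α) (hβ : β ≠ [])
    (hmβ : m ∉ β) (h : α ++ (x ++ [m]) ++ β <:+: closedEncode m B w) :
    ∃ i w₀ j, i :: (w₀ ++ [j]) <:+: w ∧ α <:+ B i ∧ β <+: B j ∧
      α ++ closedEncode m B w₀ <:+ α ++ (x ++ [m]) := by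
  obtain ⟨e, y, hx, hme⟩ := List.eq_append_cons_of_mem (a := m) (xs := x ++ [m]) (by simp)
  obtain ⟨i, w₀, j, hinf, hαe, hy, hβj⟩ :=
    hB.exists_decode_of_framed_infix (α := α ++ e) (z := m :: y) (by simp [hα]) (by simp [hmα, hme])
      hβ hmβ (by rwa [hx, ← List.append_assoc] at h) (List.prefix_append [m] y)
      (List.suffix_of_suffix_length_le (l₃ := x ++ [m]) (List.suffix_append x [m])
        ⟨e, hx.symm⟩ (by simp))
  have hα_suf : α <:+ α ++ e := by
    obtain ⟨n, c, hn⟩ := hB.exists_eq_replicate i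
    obtain ⟨k, -, hk⟩ := List.sublist_replicate_iff.1 (hn ▸ hαe.sublist)
    exact hk ▸ suffix_of_infix_replicate (hk ▸ (List.prefix_append α e).isInfix)
  have hα_block : α <:+ B i := hα_suf.trans hαe
  refine ⟨i, w₀, j, hinf, hα_block, hβj, ?_⟩
  rw [hx, hy, ← List.append_assoc]
  exact List.suffix_append_self_iff.2 hα_suf

theorem exists_palindrome_of_framed_infix {w₀ : List ι} (hα : α ≠ []) (hmα : m ∉ α)
    (hframed : FramedPalReturns {i | α <:+ B i} w)
    (h : α ++ closedEncode m B w₀ ++ α.reverse <:+: closedEncode m B w) (hy : y.Palindrome)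
    (hy_pre : y <+: w₀) (hy_suf : y <:+ w₀) (hne : y ≠ w₀)
    (hpre : closedEncode m B y ++ α.reverse <+: closedEncode m B w₀ ++ α.reverse)
    (hsuf : α ++ closedEncode m B y <:+ α ++ closedEncode m B w₀) :
    ∃ q : List ι, q.Palindrome ∧ α ++ closedEncode m B q <:+ α ++ closedEncode m B w₀ ∧
      y <:+ q ∧ y ≠ q := by
  have hmβ : m ∉ α.reverse := by simpa using hmα
  have suffix_of_prefix {j : ι} (h : α.reverse <+: B j) : α <:+ B j := by
    rwa [← List.reverse_prefix, hB.reverse_block]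
  obtain ⟨i, w₁, j, hinf, hi, hw₁, hj⟩ := hB.exists_decode_of_framed_infix hα hmα
    (by simpa using hα) hmβ h (marker_prefix_closedEncode w₀) (marker_suffix_closedEncode w₀)
  obtain rfl := hB.closedEncode_injective hw₁
  obtain ⟨j', hj'w, hj'⟩ := exists_concat_prefix_of_closedEncode_append_prefix hmβ hpre hy_pre hne
  obtain ⟨i', hi'w, hi'⟩ :=
    hB.exists_cons_suffix_of_append_closedEncode_suffix hmα hsuf hy_suf hne
  obtain ⟨i'', hi'', q, hq, hqw, hyq⟩ := hframed hinf hi (suffix_of_prefix hj) hy hi'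
    (suffix_of_prefix hj') hj'w hi'w
  exact ⟨q, hq, append_closedEncode_suffix_of_cons_suffix (f := fun _ => α) hqw hi'', hyq⟩

theorem palReturns_closedEncode_of_mem (hw : PalReturns w)
    (hframed : ∀ α ≠ [], FramedPalReturns {i | α <:+ B i} w) {z p : List A}
    (hz : z <:+: closedEncode m B w) (hp : p.Palindrome) (hmp : m ∈ p) (hpre : p <+: z)
    (hsuf : p <:+ z) (hne : p ≠ z) :
    ∃ q : List A, q.Palindrome ∧ q <:+ z ∧ p <:+ q ∧ p ≠ q := by
  obtain ⟨α, x, rfl, hmα, hx, hmx⟩ := palindrome_decomposition_of_mem hp hmp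
  have hxm := singleton_suffix_of_palindrome hx hmx
  obtain ⟨z, rfl, hxz, hzx⟩ := exists_middle_of_prefix_of_suffix hpre hsuf
  have hz_pre := hmx.trans hxz
  have hz_suf := hxm.trans hzx
  obtain ⟨w₀, hw₀, rfl⟩ :=
    hB.exists_decode_of_infix ((List.infix_append α z α.reverse).trans hz) hz_pre hz_suf
  obtain ⟨y, -, rfl⟩ := hB.exists_decode_of_infix hxz.isInfix hmx hxm
  have hypal := hB.palindrome_closedEncode_iff.1 hx
  suffices ∃ q : List ι, q.Palindrome ∧
      α ++ closedEncode m B q <:+ α ++ closedEncode m B w₀ ∧ y <:+ q ∧ y ≠ q by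
    obtain ⟨q, hq, hqw, hyq, hyq_ne⟩ := this
    have hqz := List.suffix_append_self_iff (l₃ := α.reverse) |>.2 hqw
    refine ⟨α ++ closedEncode m B q ++ α.reverse, .of_reverse_eq ?_, hqz,
      List.suffix_of_suffix_length_le hsuf hqz ?_, ?_⟩
    · simp [hB.reverse_closedEncode, hq.reverse_eq]
    · simpa using (closedEncode_suffix_closedEncode (m := m) (B := B) hyq).length_le
    · simpa [hB.closedEncode_injective.eq_iff] using hyq_ne
  have hne' : y ≠ w₀ := by rintro rfl; exact hne rfl
  have hy_pre := hB.prefix_of_closedEncode_prefix hxz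
  have hy_suf := hB.suffix_of_closedEncode_suffix hzx
  rcases eq_or_ne α [] with rfl | hα
  · obtain ⟨q, hq, hqw, hyq⟩ := hw hw₀ hypal hy_pre hy_suf hne'
    exact ⟨q, hq, closedEncode_suffix_closedEncode hqw, hyq⟩
  · exact hB.exists_palindrome_of_framed_infix hα hmα (hframed α hα) hz hypal hy_pre hy_suf hne'
      ((List.prefix_append_right_inj α).1 (by simpa using hpre))
      (List.suffix_append_self_iff.1 hsuf)

theorem palReturns_closedEncode_of_notMem
    (hletter : ∀ α ≠ [], LetterPalReturns {i | α <:+ B i} w) {z p : List A}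
    (hz : z <:+: closedEncode m B w) (hp : p.Palindrome) (hmp : m ∉ p) (hpre : p <+: z)
    (hsuf : p <:+ z) (hne : p ≠ z) :
    ∃ q : List A, q.Palindrome ∧ q <:+ z ∧ p <:+ q ∧ p ≠ q := by
  obtain ⟨l, rfl⟩ := hsuf
  obtain ⟨l, c, rfl⟩ := (List.eq_nil_or_concat' l).resolve_left (by rintro rfl; exact hne rfl)
  have hcp : c :: p <:+ l ++ [c] ++ p := ⟨l, by simp⟩
  suffices ∃ q : List A, q.Palindrome ∧ q <:+ l ++ [c] ++ p ∧ p.length < q.length by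
    obtain ⟨q, hq, hqz, hlt⟩ := this
    exact ⟨q, hq, hqz, List.suffix_of_suffix_length_le (List.suffix_append _ p) hqz hlt.le,
      by rintro rfl; exact hlt.ne rfl⟩
  rcases eq_or_ne p [] with rfl | hp_ne
  · exact ⟨[c], .singleton c, hcp, by simp⟩
  rcases eq_or_ne m c with rfl | hmc
  · rw [List.append_assoc] at hpre
    obtain ⟨x, rfl⟩ := prefix_of_prefix_append_cons hmp hpre
    obtain ⟨i, w₀, j, hinf, hi, hj, hw₀⟩ :=
      hB.exists_decode_of_infix_append_marker hp_ne hmp hp_ne hmp (by simpa using hz)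
    have hj' : p <:+ B j := by
      rwa [← List.reverse_prefix, hB.reverse_block, hp.reverse_eq]
    obtain ⟨i', hi', q, hq, hqw⟩ := hletter p hp_ne hinf hi hj'
    refine ⟨p ++ closedEncode m B q ++ p, .of_reverse_eq ?_, ?_, ?_⟩
    · simp [hB.reverse_closedEncode, hq.reverse_eq, hp.reverse_eq]
    · rw [List.suffix_append_self_iff, List.append_assoc]
      exact (append_closedEncode_suffix_of_cons_suffix (f := fun _ => p) hqw hi').trans hw₀
    · have := length_lt_length_closedEncode (m := m) (B := B) q
      simp only [List.length_append]
      omega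
  · obtain ⟨i, hi⟩ := exists_infix_block_of_infix (List.cons_ne_nil c p) (by simp [hmc, hmp])
      (hcp.isInfix.trans hz)
    obtain ⟨n, b, hn⟩ := hB.exists_eq_replicate i
    exact ⟨c :: p, palindrome_of_infix_replicate (hn ▸ hi), hcp, by simp⟩

theorem palReturns_closedEncode (hw : PalReturns w)
    (hletter : ∀ α ≠ [], LetterPalReturns {i | α <:+ B i} w)
    (hframed : ∀ α ≠ [], FramedPalReturns {i | α <:+ B i} w) :
    PalReturns (closedEncode m B w) := by
  intro z p hz hp hpre hsuf hne
  by_cases hmp : m ∈ p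
  · exact hB.palReturns_closedEncode_of_mem hw hframed hz hp hmp hpre hsuf hne
  · exact hB.palReturns_closedEncode_of_notMem hletter hz hp hmp hpre hsuf hne

end IsMarkerCode
end MarkerCodes

section UpwardRich

/-- The invariant of the words over `ℕ` built by iterating `i ↦ 0(i+1)`, `D ↦ 0DD`: palindromic
returns, also to palindromes framed by letters of an upper set. -/
structure UpwardRich (w : List ℕ) : Prop where
  palReturns : PalReturns w
  letterPalReturns : ∀ k, LetterPalReturns (Set.Ici k) w
  framedPalReturns : ∀ k, FramedPalReturns (Set.Ici k) w

variable {w : List ℕ}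

theorem UpwardRich.of_infix {w' : List ℕ} (hw : UpwardRich w) (h : w' <:+: w) : UpwardRich w' :=
  ⟨hw.palReturns.of_infix h, fun k => (hw.letterPalReturns k).of_infix h,
    fun k => (hw.framedPalReturns k).of_infix h⟩

theorem upwardRich_nil : UpwardRich [] := by
  refine ⟨fun z p hz _ hp _ hne => ?_, fun k i z j h => ?_, fun k i z j h => ?_⟩
  · obtain rfl := List.infix_nil.1 hz
    exact absurd (List.prefix_nil.1 hp) hne
  all_goals simp at h

theorem UpwardRich.palReturns_closedEncode {A : Type*} {m : A} {B : ℕ → List A}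
    (hw : UpwardRich w) (hB : IsMarkerCode m B)
    (hcontext : ∀ α ≠ [], {i | α <:+ B i} = ∅ ∨ (∃ c, {i | α <:+ B i} = {c}) ∨
      ∃ k, {i | α <:+ B i} = Set.Ici k) :
    PalReturns (closedEncode m B w) := by
  refine hB.palReturns_closedEncode hw.palReturns (fun α hα => ?_) (fun α hα => ?_) <;>
    rcases hcontext α hα with h | ⟨c, h⟩ | ⟨k, h⟩ <;> rw [h]
  · exact letterPalReturns_empty
  · exact hw.palReturns.letterPalReturns_singleton c
  · exact hw.letterPalReturns k
  · exact framedPalReturns_empty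
  · exact hw.palReturns.framedPalReturns_singleton c
  · exact hw.framedPalReturns k

/-- The words `B` in `φ(i) = 0 B(i)`, where `D = d - 1`: `i + 1` for `i < D` and `D D` for `i = D`.
For larger `i` it is a longer power of `D`, so that the map stays injective on all of `ℕ`; the
subtraction is truncated. -/
def phiTail (D i : ℕ) : List ℕ := List.replicate (i + 1 - D + 1) (min (i + 1) D)

variable {D : ℕ}

theorem mem_phiTail {i c : ℕ} : c ∈ phiTail D i ↔ c = min (i + 1) D := by
  simp [phiTail]

theorem isMarkerCode_phiTail (hD : 1 ≤ D) : IsMarkerCode 0 (phiTail D) where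
  injective i j h := by
    obtain ⟨hlen, hlet⟩ := List.replicate_inj.1 h
    omega
  marker_notMem i := by rw [mem_phiTail]; omega
  exists_eq_replicate i := ⟨_, _, rfl⟩

theorem setOf_suffix_phiTail (hD : 1 ≤ D) {α : List ℕ} (hα : α ≠ []) :
    {i | α <:+ phiTail D i} = ∅ ∨ (∃ c, {i | α <:+ phiTail D i} = {c}) ∨
      ∃ k, {i | α <:+ phiTail D i} = Set.Ici k := by
  rcases Set.eq_empty_or_nonempty {i | α <:+ phiTail D i} with h | ⟨i₀, hi₀⟩
  · exact Or.inl h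
  obtain ⟨_ | a, -, rfl⟩ := List.sublist_replicate_iff.1 hi₀.sublist
  · exact absurd rfl hα
  simp only [phiTail, replicate_suffix_replicate_iff, Set.mem_ofPred_eq] at hi₀ ⊢
  rcases lt_or_ge (i₀ + 1) D with hlt | hge
  · refine Or.inr (Or.inl ⟨i₀, ?_⟩)
    ext i
    simp only [Set.mem_ofPred_eq, Set.mem_singleton_iff]
    omega
  · refine Or.inr (Or.inr ⟨a + D - 1, ?_⟩)
    ext i
    simp only [Set.mem_ofPred_eq, Set.mem_Ici]
    omega

theorem eq_of_pair_infix_closedEncode {a b : ℕ} (ha : a ≠ 0) (hb : b ≠ 0)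
    (h : [a, b] <:+: closedEncode 0 (phiTail D) w) : a = D ∧ b = D := by
  obtain ⟨i, hi⟩ := exists_infix_block_of_infix (by simp) (by simp [ha.symm, hb.symm]) h
  have hlen := hi.length_le
  have ha' := mem_phiTail.1 (hi.subset List.mem_cons_self)
  have hb' := mem_phiTail.1 (hi.subset (List.mem_cons_of_mem a List.mem_cons_self))
  simp only [phiTail, List.length_cons, List.length_nil, List.length_replicate] at hlen
  omega

theorem le_of_mem_phiTail {k i c : ℕ} (hc : k + 1 ≤ c) (h : c ∈ phiTail D i) : k ≤ i := by
  rw [mem_phiTail] at h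
  omega

theorem exists_cons_closedEncode_suffix {k i i' c : ℕ} {q : List ℕ} (h : i' :: q <:+ i :: w)
    (hi' : k ≤ i') (hci : c ∈ phiTail D i) (hc : k + 1 ≤ c) :
    ∃ c', k + 1 ≤ c' ∧
      c' :: closedEncode 0 (phiTail D) q <:+ c :: closedEncode 0 (phiTail D) w := by
  rw [mem_phiTail] at hci
  refine ⟨min (i' + 1) D, by omega, ?_⟩
  subst hci
  exact append_closedEncode_suffix_of_cons_suffix (f := fun i => [min (i + 1) D]) h
    (replicate_suffix_replicate_iff (a := 0).2 ⟨by omega, rfl⟩)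

theorem UpwardRich.letterPalReturns_closedEncode (hw : UpwardRich w) (hD : 1 ≤ D) (k : ℕ) :
    LetterPalReturns (Set.Ici (k + 1)) (closedEncode 0 (phiTail D) w) := by
  intro i z j hz (hi : k + 1 ≤ i) (hj : k + 1 ≤ j)
  have zero_notMem {c : ℕ} (hc : k + 1 ≤ c) : 0 ∉ [c] := by rw [List.mem_singleton]; omega
  obtain rfl | ⟨x, a, rfl⟩ := List.eq_nil_or_concat' z
  · exact ⟨i, hi, [], .nil, List.suffix_rfl⟩
  rcases eq_or_ne a 0 with rfl | ha
  · obtain ⟨i₀, w₀, j₀, hinf, hi₀, hj₀, hw₀⟩ :=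
      (isMarkerCode_phiTail hD).exists_decode_of_infix_append_marker (α := [i]) (β := [j])
        (by simp) (zero_notMem hi) (by simp) (zero_notMem hj) hz
    have hi₀ : i ∈ phiTail D i₀ := hi₀.subset List.mem_cons_self
    obtain ⟨i', hi', q, hq, hqw⟩ := hw.letterPalReturns k hinf (le_of_mem_phiTail hi hi₀)
      (le_of_mem_phiTail hj (hj₀.subset List.mem_cons_self))
    obtain ⟨c, hc, hcw⟩ := exists_cons_closedEncode_suffix hqw hi' hi₀ hi
    exact ⟨c, hc, _, (isMarkerCode_phiTail hD).palindrome_closedEncode_iff.2 hq, hcw.trans hw₀⟩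
  · have haj : [a, j] <:+: closedEncode 0 (phiTail D) w :=
      (List.IsSuffix.isInfix ⟨i :: x, by simp⟩).trans hz
    obtain ⟨rfl, rfl⟩ := eq_of_pair_infix_closedEncode ha (by omega) haj
    exact ⟨j, hj, [], .nil, ⟨i :: x, by simp⟩⟩

theorem eq_of_framed_infix_closedEncode {i j i' j' : ℕ} {y z : List ℕ} (hi : i ≠ 0) (hj : j ≠ 0)
    (hi' : i' ≠ 0) (hj' : j' ≠ 0) (hz : i :: (z ++ [j]) <:+: closedEncode 0 (phiTail D) w)
    (hy : y.Palindrome) (hy0 : ¬ [0] <+: y) (hpre : y ++ [j'] <+: z) (hsuf : i' :: y <:+ z) :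
    i = D ∧ j = D ∧ i' = D ∧ j' = D := by
  have left {b : ℕ} (hb : b ≠ 0) (h : [b] <+: z) : i = D ∧ b = D := by
    refine eq_of_pair_infix_closedEncode hi hb (List.IsInfix.trans ?_ hz)
    exact (List.cons_prefix_cons.2 ⟨rfl, h.trans (List.prefix_append z [j])⟩).isInfix
  have right {b : ℕ} (hb : b ≠ 0) (h : [b] <:+ z) : b = D ∧ j = D := by
    refine eq_of_pair_infix_closedEncode hb hj (List.IsInfix.trans ?_ hz)
    exact ((List.suffix_append_self_iff (l₃ := [j]).2 h).trans (List.suffix_cons i _)).isInfix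
  obtain _ | ⟨b, y⟩ := y
  · exact ⟨(left hj' hpre).1, (right hi' hsuf).2, (right hi' hsuf).1, (left hj' hpre).2⟩
  have hb : b ≠ 0 := by rintro rfl; simp at hy0
  have hpre_b : [b] <+: b :: y := List.prefix_append [b] y
  have hsuf_b : [b] <:+ b :: y := singleton_suffix_of_palindrome hy hpre_b
  have middle : z <:+: closedEncode 0 (phiTail D) w := (List.infix_append' [i] z [j]).trans hz
  have hi'b : [i', b] <:+: z := (List.IsPrefix.isInfix ⟨y, rfl⟩).trans hsuf.isInfix
  have hbj' : [b, j'] <:+: z :=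
    (List.suffix_append_self_iff (l₃ := [j']).2 hsuf_b).isInfix.trans hpre.isInfix
  exact ⟨(left hb (hpre_b.trans ((List.prefix_append _ _).trans hpre))).1,
    (right hb (hsuf_b.trans ((List.suffix_cons i' _).trans hsuf))).2,
    (eq_of_pair_infix_closedEncode hi' hb (hi'b.trans middle)).1,
    (eq_of_pair_infix_closedEncode hb hj' (hbj'.trans middle)).2⟩

theorem UpwardRich.exists_framed_palindrome_of_marker_prefix (hw : UpwardRich w) (hD : 1 ≤ D)
    {k i j i' j' : ℕ} {y z : List ℕ} (hi : k + 1 ≤ i) (hj : k + 1 ≤ j) (hi' : k + 1 ≤ i')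
    (hj' : k + 1 ≤ j') (hz : i :: (z ++ [j]) <:+: closedEncode 0 (phiTail D) w)
    (hy : y.Palindrome) (hy0 : [0] <+: y) (hpre : y ++ [j'] <+: z) (hsuf : i' :: y <:+ z) :
    ∃ c ∈ Set.Ici (k + 1), ∃ q : List ℕ, q.Palindrome ∧ c :: q <:+ i :: z ∧ y <:+ q ∧ y ≠ q := by
  have hB := isMarkerCode_phiTail hD
  have zero_notMem {c : ℕ} (hc : k + 1 ≤ c) : 0 ∉ [c] := by rw [List.mem_singleton]; omega
  have hy0' := singleton_suffix_of_palindrome hy hy0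
  have hyz_pre := (List.prefix_append y [j']).trans hpre
  have hyz_suf := (List.suffix_cons i' y).trans hsuf
  obtain ⟨i₀, w₀, j₀, hinf, hi₀, rfl, hj₀⟩ := hB.exists_decode_of_framed_infix
    (α := [i]) (β := [j]) (by simp) (zero_notMem hi) (by simp) (zero_notMem hj) hz
    (hy0.trans hyz_pre) (hy0'.trans hyz_suf)
  obtain ⟨y, -, rfl⟩ := hB.exists_decode_of_infix hyz_pre.isInfix hy0 hy0'
  have hne : y ≠ w₀ := by rintro rfl; simpa using hpre.length_le
  obtain ⟨j₁, hj₁w, hj₁⟩ := exists_concat_prefix_of_closedEncode_append_prefix (γ := [])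
    (zero_notMem hj') (by simpa using hpre) (hB.prefix_of_closedEncode_prefix hyz_pre) hne
  obtain ⟨i₁, hi₁w, hi₁⟩ := hB.exists_cons_suffix_of_append_closedEncode_suffix (γ := [])
    (zero_notMem hi') hsuf (hB.suffix_of_closedEncode_suffix hyz_suf) hne
  have hi₀ : i ∈ phiTail D i₀ := hi₀.subset List.mem_cons_self
  obtain ⟨i₂, hi₂, q, hq, hqw, hyq, hyq_ne⟩ := hw.framedPalReturns k hinf
    (le_of_mem_phiTail hi hi₀) (le_of_mem_phiTail hj (hj₀.subset List.mem_cons_self))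
    (hB.palindrome_closedEncode_iff.1 hy)
    (le_of_mem_phiTail hi' (hi₁.subset List.mem_cons_self))
    (le_of_mem_phiTail hj' (hj₁.subset List.mem_cons_self)) hj₁w hi₁w
  obtain ⟨c, hc, hcw⟩ := exists_cons_closedEncode_suffix hqw hi₂ hi₀ hi
  exact ⟨c, hc, _, hB.palindrome_closedEncode_iff.2 hq, hcw,
    closedEncode_suffix_closedEncode hyq, hB.closedEncode_injective.ne hyq_ne⟩

theorem UpwardRich.framedPalReturns_closedEncode (hw : UpwardRich w) (hD : 1 ≤ D) (k : ℕ) :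
    FramedPalReturns (Set.Ici (k + 1)) (closedEncode 0 (phiTail D) w) := by
  intro i z j hz (hi : k + 1 ≤ i) (hj : k + 1 ≤ j) i' y j' hy (hi' : k + 1 ≤ i')
    (hj' : k + 1 ≤ j') hpre hsuf
  by_cases hy0 : [0] <+: y
  · exact hw.exists_framed_palindrome_of_marker_prefix hD hi hj hi' hj' hz hy hy0 hpre hsuf
  · have hpal := hw.palReturns_closedEncode (isMarkerCode_phiTail hD) fun _ =>
      setOf_suffix_phiTail hD
    obtain ⟨hiD, hjD, hi'D, hj'D⟩ := eq_of_framed_infix_closedEncode (by omega) (by omega)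
      (by omega) (by omega) hz hy hy0 hpre hsuf
    obtain ⟨c, rfl, h⟩ := hpal.framedPalReturns_singleton D hz hiD hjD hy hi'D hj'D hpre hsuf
    exact ⟨c, hiD ▸ hi, h⟩

theorem UpwardRich.closedEncode_phiTail (hw : UpwardRich w) (hD : 1 ≤ D) :
    UpwardRich (closedEncode 0 (phiTail D) w) := by
  have hpal := hw.palReturns_closedEncode (isMarkerCode_phiTail hD) fun _ => setOf_suffix_phiTail hD
  have hIci : Set.Ici (0 : ℕ) = Set.univ := Set.Ici_bot
  refine ⟨hpal, ?_, ?_⟩ <;> rintro (_ | k)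
  · exact hIci ▸ letterPalReturns_univ
  · exact hw.letterPalReturns_closedEncode hD k
  · exact hIci ▸ hpal.framedPalReturns_univ
  · exact hw.framedPalReturns_closedEncode hD k

end UpwardRich

section Sequences

variable {u : ℕ → A} {w : List A}

theorem map_range_prefix_map_range {m n : ℕ} (u : ℕ → A) (h : m ≤ n) :
    (List.range m).map u <+: (List.range n).map u := by
  rw [← Nat.add_sub_cancel' h, List.range_add, List.map_append]
  exact List.prefix_append _ _

theorem OccursAt.map_range_prefix {n : ℕ} (h : OccursAt w u 0) (hn : n ≤ w.length) :
    (List.range n).map u <+: w := by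
  rw [show w = (List.range w.length).map u by simpa [OccursAt] using h]
  exact map_range_prefix_map_range u hn

theorem IsFactorS.exists_infix_map_range (h : IsFactorS w u) :
    ∃ n, w <:+: (List.range n).map u := by
  obtain ⟨j, h⟩ := h
  refine ⟨j + w.length, List.IsSuffix.isInfix ⟨(List.range j).map u, ?_⟩⟩
  conv_lhs => rw [h]
  simp [List.range_add]

theorem richSeq_of_palReturns (h : ∀ n, PalReturns ((List.range n).map u)) : RichSeq u := by
  intro w hw
  obtain ⟨n, hn⟩ := hw.exists_infix_map_range
  exact ((h n).of_infix hn).richWord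

end Sequences

section PhiFixedPoint

variable {d : ℕ} {u : ℕ → ℕ}

theorem le_of_mem_phiW {c : ℕ} {w : List ℕ} (h : c ∈ phiW d w) : c ≤ d - 1 := by
  obtain ⟨i, -, hc⟩ := List.mem_flatMap.1 h
  unfold phiL at hc
  split_ifs at hc <;> simp only [List.mem_cons, List.not_mem_nil, or_false] at hc <;> omega

theorem phiW_eq_encode {w : List ℕ} (hw : ∀ i ∈ w, i ≤ d - 1) :
    phiW d w = encode 0 (phiTail (d - 1)) w := by
  refine List.flatMap_congr fun i hi => ?_
  have := hw i hi
  unfold phiL phiTail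
  split_ifs with h
  · rw [Nat.sub_eq_zero_of_le (by omega), min_eq_left (by omega)]
    rfl
  · obtain rfl : i = d - 1 := by omega
    rw [Nat.add_sub_cancel_left, min_eq_right (by omega)]
    rfl

theorem length_le_length_phiW (w : List ℕ) : w.length ≤ (phiW d w).length :=
  length_le_length_flatMap (fun i => by unfold phiL; split_ifs <;> simp) w

theorem IsPhiFixed.apply_le_s4 (hu : IsPhiFixed d u) (n : ℕ) : u n ≤ d - 1 := by
  have h := (hu.2 (n + 1)).map_range_prefix (n := n + 1) (by
    simpa using length_le_length_phiW (d := d) ((List.range (n + 1)).map u))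
  exact le_of_mem_phiW (h.subset (List.mem_map_of_mem List.self_mem_range_succ))

theorem IsPhiFixed.map_range_succ_prefix (hu : IsPhiFixed d u) (n : ℕ) :
    (List.range (n + 1)).map u <+: closedEncode 0 (phiTail (d - 1)) ((List.range n).map u) := by
  have hpre : closedEncode 0 (phiTail (d - 1)) ((List.range n).map u) <+:
      phiW d ((List.range (n + 1)).map u) := by
    rw [phiW_eq_encode (by simp [hu.apply_le_s4]), List.range_succ, List.map_append, encode_append]
    exact (List.prefix_append_right_inj _).2 (List.prefix_append [0] _)
  have hlen := length_lt_length_closedEncode (m := 0) (B := phiTail (d - 1)) ((List.range n).map u)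
  rw [List.length_map, List.length_range] at hlen
  exact List.prefix_of_prefix_length_le
    ((hu.2 (n + 1)).map_range_prefix (hlen.trans_le hpre.length_le)) hpre (by simpa using hlen)

theorem IsPhiFixed.upwardRich (hu : IsPhiFixed d u) (hd : 2 ≤ d) (n : ℕ) :
    UpwardRich ((List.range n).map u) := by
  induction n with
  | zero => exact upwardRich_nil
  | succ n ih =>
    exact (ih.closedEncode_phiTail (D := d - 1) (by omega)).of_infix
      (hu.map_range_succ_prefix n).isInfix

end PhiFixedPoint

section Projection

theorem isMarkerCode_replicate {m c : A} (hmc : m ≠ c) :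
    IsMarkerCode m fun i => List.replicate i c where
  injective _ _ h := (List.replicate_inj.1 h).1
  marker_notMem _ h := hmc (List.eq_of_mem_replicate h)
  exists_eq_replicate i := ⟨i, c, rfl⟩

theorem setOf_suffix_replicate {α : List A} (hα : α ≠ []) (c : A) :
    {i | α <:+ List.replicate i c} = ∅ ∨ ∃ k, {i | α <:+ List.replicate i c} = Set.Ici k := by
  rcases Set.eq_empty_or_nonempty {i | α <:+ List.replicate i c} with h | ⟨i₀, hi₀⟩
  · exact Or.inl h
  obtain ⟨_ | a, -, rfl⟩ := List.sublist_replicate_iff.1 hi₀.sublist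
  · exact absurd rfl hα
  · exact Or.inr ⟨a + 1, by ext; simp [replicate_suffix_replicate_iff]⟩

theorem UpwardRich.palReturns_flatMap_piL {w : List ℕ} (hw : UpwardRich w) :
    PalReturns (w.flatMap piL) := by
  have hB : IsMarkerCode false fun i => List.replicate i true := isMarkerCode_replicate (by decide)
  have hpal : PalReturns (closedEncode false (fun i => List.replicate i true) w) :=
    hw.palReturns_closedEncode hB fun α hα => (setOf_suffix_replicate hα true).imp_right Or.inr
  exact hpal.of_infix (List.prefix_append _ [false]).isInfix

end Projection

theorem statement4_general (d : ℕ) (hd : 2 ≤ d) (u : ℕ → ℕ) (hu : IsPhiFixed d u)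
    (v : ℕ → Bool) (hv : ∀ m : ℕ, OccursAt (((List.range m).map u).flatMap piL) v 0) :
    RichSeq v := by
  refine richSeq_of_palReturns fun n => ?_
  have hlen : n ≤ (((List.range n).map u).flatMap piL).length := by
    simpa using
      length_le_length_flatMap (f := piL) (fun _ => List.cons_ne_nil _ _) ((List.range n).map u)
  exact (hu.upwardRich hd n).palReturns_flatMap_piL.of_infix ((hv n).map_range_prefix hlen).isInfix

/-- For `d ≥ 3`, the binary sequence `π(u_d)` (image of the fixed point
`u_d` of `φ_d` under `π : i ↦ a bⁱ`) is rich. -/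
theorem statement4 (d : ℕ) (hd : 3 ≤ d) (u : ℕ → ℕ) (hu : IsPhiFixed d u)
    (v : ℕ → Bool) (hv : ∀ m : ℕ, OccursAt (((List.range m).map u).flatMap piL) v 0) :
    RichSeq v :=
  statement4_general d (by omega) u hu v hv

end RichRT
end
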